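/- arXiv:2109.13552 — 3 statements merged into one kernel-verified Lean document; each statement's English description precedes it below -/
import Mathlib

section
/- For every integer d ≥ 2, the set of tuples (s₁,…,s_{2d}) ∈ ℂ^{2d} such that the polynomial D(t) = t^{2d} + s₁t^{2d−1} + ⋯ + s_{2d} ∈ ℂ[t] is squarefree and Pellian is dense, with respect to the Euclidean topology on ℂ^{2d}, in the set of tuples (s₁,…,s_{2d}) for which D is squarefree. -/
open Polynomial

/-- The monic polynomial `t^(2d) + s₁ t^(2d-1) + ⋯ + s_(2d)` determined by the tuple `s`. -/
noncomputable def Dpoly (d : ℕ) (s : Fin (2*d) → ℂ) : Polynomial ℂ :=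
  X ^ (2*d) + ∑ i : Fin (2*d), C (s i) * X ^ (2*d - 1 - (i : ℕ))

/-- A polynomial `D ∈ ℂ[t]` is Pellian if the Pell–Abel equation `A² - D B² = 1`
has a solution with `B ≠ 0`. -/
def Pellian (D : Polynomial ℂ) : Prop :=
  ∃ A B : Polynomial ℂ, B ≠ 0 ∧ A ^ 2 - D * B ^ 2 = 1

open Set Filter Topology MeasureTheory Asymptotics

/-!
Take a base point `b` off finitely many real lines, write the roots of `D` as `b + 1 / e j`, and cut
the plane along the rays that leave these roots in the direction away from `b`. For a polynomial
`Q ≠ 0` of degree less than `d` and a constant `c`, the abelian integral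
`H = c + ∫ Q / √∏ (1 - e j * t)` is single valued on the cut plane, and near the `j`-th cut it has
the form `P j + √(1 - e j * t) * K` with `K` holomorphic. If `sinh (P j) = 0` for all `j`, then
`cosh H` and `sinh H / √∏ (1 - e j * t)` extend to entire functions. As `H` grows at most
logarithmically, these are polynomials, and they solve the Pell–Abel equation.

It remains to move all `2 * d` branch values `P j` into `π * I * ℤ`. Counting real dimensions,
`Q ≠ 0` and `c` can be chosen with every `P j` imaginary. The map `(e, Q, c) ↦ P` is a submersion
where `Q ≠ 0`: in a direction in which every `P j` is stationary, `√∏ (1 - e j * t)` times the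
derivative of `H` is a polynomial of degree at most `d`, so these directions form a space of the
minimal dimension `d + 1`. Hence an arbitrarily small change of `(e, Q, c)` turns the `P j` into
rational multiples of `π * I`, and scaling `(Q, c)` clears the denominators.
-/


section ParametricIntegral

variable {E : Type*} [TopologicalSpace E] {x₀ : E} {a b : ℝ}

lemma eventually_forall_uIcc_of_nhds {p : E × ℂ → Prop}
    (hp : ∀ u ∈ uIcc a b, ∀ᶠ y in 𝓝 (x₀, (u : ℂ)), p y) :
    ∀ᶠ x in 𝓝 x₀, ∀ u ∈ uIcc a b, p (x, (u : ℂ)) := by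
  refine isCompact_uIcc.eventually_forall_of_forall_eventually fun u hu => ?_
  have hcont : Continuous fun y : E × ℝ => (y.1, (y.2 : ℂ)) := by fun_prop
  exact (hcont.tendsto (x₀, u)).eventually (hp u hu)

lemma continuousOn_uIcc_slice {G : Type*} [TopologicalSpace G] {k : E × ℂ → G}
    (hk : ∀ u ∈ uIcc a b, ContinuousAt k (x₀, (u : ℂ))) :
    ContinuousOn (fun u : ℝ => k (x₀, (u : ℂ))) (uIcc a b) := fun u hu =>
  ((hk u hu).comp (f := fun u : ℝ => (x₀, (u : ℂ))) (by fun_prop)).continuousWithinAt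

lemma exists_eventually_norm_le_uIcc {G : Type*} [SeminormedAddCommGroup G] {k : E × ℂ → G}
    (hk : ∀ u ∈ uIcc a b, ContinuousAt k (x₀, (u : ℂ))) :
    ∃ M, ∀ᶠ x in 𝓝 x₀, ∀ u ∈ uIcc a b, ‖k (x, (u : ℂ))‖ ≤ M := by
  obtain ⟨M, hM⟩ := isCompact_uIcc.exists_bound_of_continuousOn (continuousOn_uIcc_slice hk)
  refine ⟨M + 1, eventually_forall_uIcc_of_nhds (p := fun y => ‖k y‖ ≤ M + 1) fun u hu => ?_⟩
  exact ((hk u hu).norm.eventually_lt_const (lt_add_of_le_of_pos (hM u hu) one_pos)).mono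
    fun _ h => h.le

end ParametricIntegral

lemma hasFDerivAt_intervalIntegral_of_analyticAt {E G : Type*} [NormedAddCommGroup E]
    [NormedSpace ℂ E] [NormedAddCommGroup G] [NormedSpace ℂ G] [CompleteSpace G]
    {k : E × ℂ → G} {x₀ : E} {a b : ℝ} (hk : ∀ u ∈ uIcc a b, AnalyticAt ℂ k (x₀, (u : ℂ))) :
    HasFDerivAt (fun x => ∫ u in a..b, k (x, (u : ℂ)))
      (∫ u in a..b, (fderiv ℂ k (x₀, (u : ℂ))).comp (ContinuousLinearMap.inl ℂ E ℂ)) x₀ := by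
  have hcont {y : E} (hy : ∀ u ∈ uIcc a b, AnalyticAt ℂ k (y, (u : ℂ))) :=
    continuousOn_uIcc_slice fun u hu => (hy u hu).continuousAt
  have hk' : ∀ u ∈ uIcc a b, ContinuousAt
      (fun p => (fderiv ℂ k p).comp (ContinuousLinearMap.inl ℂ E ℂ)) (x₀, (u : ℂ)) :=
    fun u hu => (hk u hu).fderiv.continuousAt.clm_comp continuousAt_const
  have hanalytic : ∀ᶠ x in 𝓝 x₀, ∀ u ∈ uIcc a b, AnalyticAt ℂ k (x, (u : ℂ)) :=
    eventually_forall_uIcc_of_nhds fun u hu => (hk u hu).eventually_analyticAt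
  obtain ⟨M, hM⟩ := exists_eventually_norm_le_uIcc hk'
  refine intervalIntegral.hasFDerivAt_integral_of_dominated_of_fderiv_le (𝕜 := ℂ)
    (F' := fun x u => (fderiv ℂ k (x, (u : ℂ))).comp (ContinuousLinearMap.inl ℂ E ℂ))
    (bound := fun _ => M) (hanalytic.and hM)
    (hanalytic.mono fun x hx =>
      ((hcont hx).mono uIoc_subset_uIcc).aestronglyMeasurable measurableSet_uIoc)
    (hcont hk).intervalIntegrable
    (((continuousOn_uIcc_slice hk').mono uIoc_subset_uIcc).aestronglyMeasurable
      measurableSet_uIoc)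
    (ae_of_all _ fun u hu x hx => hx.2 u (uIoc_subset_uIcc hu)) intervalIntegrable_const
    (ae_of_all _ fun u hu x hx => ?_)
  exact (hx.1 u (uIoc_subset_uIcc hu)).differentiableAt.hasFDerivAt.comp x
    (hasFDerivAt_prodMk_left x (u : ℂ))

lemma contDiffAt_intervalIntegral_of_analyticAt.{u} {E : Type u} [NormedAddCommGroup E]
    [NormedSpace ℂ E] {a b : ℝ} (n : ℕ) :
    ∀ {G : Type u} [NormedAddCommGroup G] [NormedSpace ℂ G] [CompleteSpace G]
      {k : E × ℂ → G} {x₀ : E}, (∀ u ∈ uIcc a b, AnalyticAt ℂ k (x₀, (u : ℂ))) →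
      ContDiffAt ℂ n (fun x => ∫ u in a..b, k (x, (u : ℂ))) x₀ := by
  have hderiv {G : Type u} [NormedAddCommGroup G] [NormedSpace ℂ G] [CompleteSpace G]
      {k : E × ℂ → G} {x₀ : E} (hk : ∀ u ∈ uIcc a b, AnalyticAt ℂ k (x₀, (u : ℂ))) :=
    (eventually_forall_uIcc_of_nhds fun u hu => (hk u hu).eventually_analyticAt).mono
      fun x hx => hasFDerivAt_intervalIntegral_of_analyticAt hx
  induction n with
  | zero =>
    intro G _ _ _ k x₀ hk
    exact contDiffAt_zero.2 ⟨_, hderiv hk, fun x hx =>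
      (show HasFDerivAt _ _ x from hx).continuousAt.continuousWithinAt⟩
  | succ n ih =>
    intro G _ _ _ k x₀ hk
    refine contDiffAt_succ_iff_hasFDerivAt.2 ⟨_, ⟨_, hderiv hk, fun x hx => hx⟩, ?_⟩
    exact ih (k := fun p => (fderiv ℂ k p).comp (ContinuousLinearMap.inl ℂ E ℂ)) fun u hu =>
      (((ContinuousLinearMap.compL ℂ E (E × ℂ) G).flip
        (ContinuousLinearMap.inl ℂ E ℂ)).analyticAt _).comp (hk u hu).fderiv

section SegmentMean

/-- The mean of `h` over the segment `[a, t]`, parametrised by `a + uⁿ (t - a)`. For `n = 1` it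
yields the primitive `(t - a) * segmentMean 1 h a t` of `h`; the case `n = 2` is the regular part
of the primitive of `h / √(t - a)`. -/
noncomputable def segmentMean (n : ℕ) (h : ℂ → ℂ) (a t : ℂ) : ℂ :=
  ∫ u in (0 : ℝ)..1, h (a + (u : ℂ) ^ n * (t - a))

variable {n : ℕ} {h : ℂ → ℂ} {a t : ℂ}

lemma add_pow_mul_sub_mem_segment (n : ℕ) (a t : ℂ) {u : ℝ} (hu : u ∈ uIcc (0 : ℝ) 1) :
    a + (u : ℂ) ^ n * (t - a) ∈ segment ℝ a t := by
  rw [uIcc_of_le zero_le_one] at hu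
  rw [segment_eq_image']
  exact ⟨u ^ n, ⟨pow_nonneg hu.1 n, pow_le_one₀ hu.1 hu.2⟩, by simp⟩

@[simp] lemma segmentMean_self (n : ℕ) (h : ℂ → ℂ) (a : ℂ) : segmentMean n h a a = h a := by
  simp [segmentMean]

lemma intervalIntegrable_segmentMean (hh : ∀ z ∈ segment ℝ a t, ContinuousAt h z) :
    IntervalIntegrable (fun u : ℝ => h (a + (u : ℂ) ^ n * (t - a))) volume 0 1 :=
  ContinuousOn.intervalIntegrable fun u hu =>
    ((hh _ (add_pow_mul_sub_mem_segment n a t hu)).comp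
      (f := fun u : ℝ => a + (u : ℂ) ^ n * (t - a)) (by fun_prop)).continuousWithinAt

lemma segmentMean_const_mul_add {h₁ h₂ : ℂ → ℂ} (c : ℂ)
    (hh₁ : ∀ z ∈ segment ℝ a t, ContinuousAt h₁ z) (hh₂ : ∀ z ∈ segment ℝ a t, ContinuousAt h₂ z) :
    segmentMean n (fun z => c * h₁ z + h₂ z) a t =
      c * segmentMean n h₁ a t + segmentMean n h₂ a t := by
  simp only [segmentMean]
  rw [intervalIntegral.integral_add ((intervalIntegrable_segmentMean hh₁).const_mul c)
    (intervalIntegrable_segmentMean hh₂), intervalIntegral.integral_const_mul]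

-- `contDiffAt_intervalIntegral_of_analyticAt` needs the parameter space in the universe of `ℂ`.
lemma contDiffAt_segmentMean {E : Type} [NormedAddCommGroup E] [NormedSpace ℂ E] (m : ℕ)
    {h : E × ℂ → ℂ} {a : E → ℂ} {x : E} (ha : AnalyticAt ℂ a x)
    (hh : ∀ z ∈ segment ℝ (a x) t, AnalyticAt ℂ h (x, z)) :
    ContDiffAt ℂ m (fun p : E × ℂ => segmentMean n (fun z => h (p.1, z)) (a p.1) p.2) (x, t) := by
  refine contDiffAt_intervalIntegral_of_analyticAt m
    (k := fun p : (E × ℂ) × ℂ => h (p.1.1, a p.1.1 + p.2 ^ n * (p.1.2 - a p.1.1)))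
    fun u hu => ?_
  have hfst : AnalyticAt ℂ (fun p : (E × ℂ) × ℂ => p.1.1) ((x, t), (u : ℂ)) :=
    analyticAt_fst.comp analyticAt_fst
  have hbase : AnalyticAt ℂ (fun p : (E × ℂ) × ℂ => a p.1.1) ((x, t), (u : ℂ)) :=
    ha.comp hfst
  refine AnalyticAt.comp (g := h) (hh _ (add_pow_mul_sub_mem_segment n (a x) t hu)) (hfst.prod ?_)
  exact hbase.add ((analyticAt_snd.pow n).mul ((analyticAt_snd.comp analyticAt_fst).sub hbase))

lemma hasDerivAt_segmentMean (hh : ∀ z ∈ segment ℝ a t, AnalyticAt ℂ h z) :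
    HasDerivAt (segmentMean n h a)
      (∫ u in (0 : ℝ)..1, (u : ℂ) ^ n * deriv h (a + (u : ℂ) ^ n * (t - a))) t := by
  set γ : ℂ × ℂ → ℂ := fun p => a + p.2 ^ n * (p.1 - a) with hγ
  have hγ_an (u : ℝ) : AnalyticAt ℂ γ (t, (u : ℂ)) :=
    analyticAt_const.add ((analyticAt_snd.pow n).mul (analyticAt_fst.sub analyticAt_const))
  have hh' {u : ℝ} (hu : u ∈ uIcc (0 : ℝ) 1) : AnalyticAt ℂ h (γ (t, (u : ℂ))) :=
    hh _ (add_pow_mul_sub_mem_segment n a t hu)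
  have hk : ∀ u ∈ uIcc (0 : ℝ) 1, AnalyticAt ℂ (h ∘ γ) (t, (u : ℂ)) :=
    fun u hu => (hh' hu).comp (hγ_an u)
  have hfderiv {u : ℝ} (hu : u ∈ uIcc (0 : ℝ) 1) :
      fderiv ℂ (h ∘ γ) (t, (u : ℂ)) (1, 0) = u ^ n * deriv h (γ (t, u)) := by
    have hγ_deriv : HasDerivAt (fun s : ℂ => γ (s, u)) ((u : ℂ) ^ n) t := by
      simpa [hγ] using (((hasDerivAt_id t).sub_const a).const_mul ((u : ℂ) ^ n)).const_add a
    have hinl : HasDerivAt (fun s : ℂ => (s, (u : ℂ))) (1, 0) t :=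
      (hasDerivAt_id t).prodMk (hasDerivAt_const t _)
    rw [mul_comm]
    exact ((hk u hu).differentiableAt.hasFDerivAt.comp_hasDerivAt t hinl).unique
      ((hh' hu).differentiableAt.hasDerivAt.comp t hγ_deriv)
  have hleibniz := (hasFDerivAt_intervalIntegral_of_analyticAt hk).hasDerivAt
  rw [ContinuousLinearMap.intervalIntegral_apply] at hleibniz
  · exact hleibniz.congr_deriv (intervalIntegral.integral_congr fun u hu => hfderiv hu)
  · exact (continuousOn_uIcc_slice
      (k := fun p => (fderiv ℂ (h ∘ γ) p).comp (ContinuousLinearMap.inl ℂ ℂ ℂ)) fun u hu =>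
      (hk u hu).fderiv.continuousAt.clm_comp continuousAt_const).intervalIntegrable

lemma exists_hasDerivAt_segmentMean (n : ℕ) (hh : ∀ z ∈ segment ℝ a t, AnalyticAt ℂ h z) :
    ∃ D, HasDerivAt (segmentMean n h a) D t ∧ n * (t - a) * D + segmentMean n h a t = h t := by
  refine ⟨_, hasDerivAt_segmentMean hh, ?_⟩
  set γ : ℝ → ℂ := fun u => a + (u : ℂ) ^ n * (t - a) with hγ
  have hh' {u : ℝ} (hu : u ∈ uIcc (0 : ℝ) 1) : AnalyticAt ℂ h (γ u) :=
    hh _ (add_pow_mul_sub_mem_segment n a t hu)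
  have hint : IntervalIntegrable (fun u : ℝ => n * (t - a) * ((u : ℂ) ^ n * deriv h (γ u)))
      volume 0 1 :=
    (ContinuousOn.intervalIntegrable fun u hu =>
      ((by fun_prop : ContinuousAt (fun u : ℝ => (u : ℂ) ^ n) u).mul
        ((hh' hu).deriv.continuousAt.comp (by fun_prop))).continuousWithinAt).const_mul _
  have hint' : IntervalIntegrable (fun u => h (γ u)) volume 0 1 :=
    intervalIntegrable_segmentMean fun z hz => (hh z hz).continuousAt
  have hderiv : ∀ u ∈ uIcc (0 : ℝ) 1, HasDerivAt (fun u : ℝ => u * h (γ u))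
      (n * (t - a) * (u ^ n * deriv h (γ u)) + h (γ u)) u := by
    intro u hu
    have hcast : HasDerivAt (fun u : ℝ => (u : ℂ)) 1 u := Complex.ofRealCLM.hasDerivAt
    have hγ_deriv : HasDerivAt γ (n * (u : ℂ) ^ (n - 1) * 1 * (t - a)) u :=
      ((hcast.pow n).mul_const (t - a)).const_add a
    have hpow : (n : ℂ) * u ^ n = u * (n * u ^ (n - 1)) := by
      cases n <;> simp [pow_succ]; ring
    refine (hcast.mul ((hh' hu).differentiableAt.hasDerivAt.comp u hγ_deriv)).congr_deriv ?_
    simp only [Function.comp_apply]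
    linear_combination -(t - a) * deriv h (γ u) * hpow
  calc _ = ∫ u in (0 : ℝ)..1, (n * (t - a) * (u ^ n * deriv h (γ u)) + h (γ u)) := by
        rw [intervalIntegral.integral_add hint hint', intervalIntegral.integral_const_mul,
          segmentMean]
    _ = h t := by
        rw [intervalIntegral.integral_eq_sub_of_hasDerivAt hderiv (hint.add hint')]
        simp [hγ]

end SegmentMean

section EntireFunctions

lemma eval_ofFn {n : ℕ} (v : Fin n → ℂ) (t : ℂ) :
    (ofFn n v).eval t = ∑ k : Fin n, v k * t ^ (k : ℕ) := by
  simp [ofFn_eq_sum_monomial, eval_finsetSum]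

lemma iteratedDeriv_eq_zero_of_isLittleO_pow {f : ℂ → ℂ} (hf : Differentiable ℂ f) {m n : ℕ}
    (hmn : n ≤ m) (ho : f =o[Bornology.cobounded ℂ] fun z => z ^ n) :
    iteratedDeriv m f 0 = 0 := by
  have hbound : ∀ ε > 0, ‖iteratedDeriv m f 0‖ ≤ m.factorial * ε := by
    intro ε hε
    obtain ⟨R, -, hR⟩ := Filter.hasBasis_cobounded_norm.eventually_iff.1 (ho.def hε)
    have hr_one : 1 ≤ max R 1 := le_max_right R 1
    have hr_pos : 0 < max R 1 := one_pos.trans_le hr_one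
    have hcauchy := Complex.norm_iteratedDeriv_le_of_forall_mem_sphere_norm_le
      (C := ε * max R 1 ^ n) m hr_pos hf.diffContOnCl (c := 0) fun z hz => by
        rw [mem_sphere_zero_iff_norm] at hz
        simpa only [norm_pow, hz] using hR ((le_max_left R 1).trans_eq hz.symm)
    refine hcauchy.trans ?_
    rw [div_le_iff₀ (pow_pos hr_pos m), ← mul_assoc]
    gcongr
  refine norm_le_zero_iff.1 (le_of_forall_pos_le_add fun ε hε => ?_)
  have hfact : (0 : ℝ) < m.factorial := Nat.cast_pos.2 m.factorial_pos
  simpa [mul_div_cancel₀ _ hfact.ne'] using hbound (ε / m.factorial) (div_pos hε hfact)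

lemma exists_polynomial_of_isLittleO_pow {f : ℂ → ℂ} (hf : Differentiable ℂ f) {n : ℕ}
    (ho : f =o[Bornology.cobounded ℂ] fun z => z ^ n) :
    ∃ p : ℂ[X], p.degree < n ∧ ∀ t, p.eval t = f t := by
  refine ⟨ofFn n fun k => ((k : ℕ).factorial : ℂ)⁻¹ * iteratedDeriv k f 0, ofFn_degree_lt _,
    fun t => ?_⟩
  rw [← Complex.taylorSeries_eq_of_entire' 0 t hf, tsum_eq_sum (s := Finset.range n), eval_ofFn,
    Finset.sum_range]
  · simp only [sub_zero]
  · intro m hm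
    rw [iteratedDeriv_eq_zero_of_isLittleO_pow hf (by simpa using hm) ho, mul_zero, zero_mul]

lemma complexSqrt_sq (z : ℂ) : Complex.sqrt z ^ 2 = z := by
  simp [Complex.sqrt]

lemma exists_differentiable_comp_sq {f : ℂ → ℂ} (hf : Differentiable ℂ f)
    (heven : Function.Even f) : ∃ g : ℂ → ℂ, Differentiable ℂ g ∧ ∀ z, g (z ^ 2) = f z := by
  have hsq {w z : ℂ} (h : w ^ 2 = z ^ 2) : f w = f z := by
    rcases sq_eq_sq_iff_eq_or_eq_neg.1 h with rfl | rfl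
    exacts [rfl, heven z]
  refine ⟨fun w => f (Complex.sqrt w), ?_, fun z => hsq (complexSqrt_sq _)⟩
  have hpunctured : ∀ w ≠ 0, DifferentiableAt ℂ (fun w => f (Complex.sqrt w)) w := by
    intro w hw
    rcases Complex.mem_slitPlane_or_neg_mem_slitPlane hw with hw | hw
    · exact (hf _).comp w (Complex.differentiableAt_sqrt hw)
    · have hrot : (fun w => f (Complex.sqrt w)) = fun w => f (Complex.I * Complex.sqrt (-w)) :=
        funext fun w => hsq (by rw [mul_pow, complexSqrt_sq, complexSqrt_sq, Complex.I_sq]; ring)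
      rw [hrot]
      exact (hf _).comp w (((Complex.differentiableAt_sqrt hw).comp w
        differentiableAt_id.neg).const_mul _)
  intro w
  rcases eq_or_ne w 0 with rfl | hw
  · have hcont : ContinuousAt (fun w => f (Complex.sqrt w)) 0 :=
      (hf _).continuousAt.comp (Complex.continuousAt_sqrt (Or.inl le_rfl))
    exact (Complex.analyticAt_of_differentiable_on_punctured_nhds_of_continuousAt
      (eventually_nhdsWithin_of_forall hpunctured) hcont).differentiableAt
  · exact hpunctured w hw

lemma exists_cosh_sinh_comp_sq : ∃ C S : ℂ → ℂ, Differentiable ℂ C ∧ Differentiable ℂ S ∧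
    (∀ z, C (z ^ 2) = Complex.cosh z) ∧ ∀ z, z * S (z ^ 2) = Complex.sinh z := by
  obtain ⟨C, hC, hcosh⟩ :=
    exists_differentiable_comp_sq Complex.differentiable_cosh Complex.cosh_neg
  refine ⟨C, fun w => 2 * deriv C w, hC, (hC.deriv).const_mul 2, hcosh, fun z => ?_⟩
  have hchain : HasDerivAt (fun z => C (z ^ 2)) (deriv C (z ^ 2) * (2 * z)) z := by
    have hsq : HasDerivAt (fun z : ℂ => z ^ 2) (2 * z) z := by simpa using hasDerivAt_pow 2 z
    exact (hC (z ^ 2)).hasDerivAt.comp z hsq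
  rw [funext hcosh] at hchain
  linear_combination hchain.unique (Complex.hasDerivAt_cosh z)

end EntireFunctions

section CutPlane

variable {ι : Type*} {e : ι → ℂ} {i j : ι} {t : ℂ}

/-- The plane cut along the rays `{r / e j | 1 ≤ r}`, on which every principal square root
`√(1 - e j * t)` is holomorphic. -/
def cutPlane (e : ι → ℂ) : Set ℂ :=
  {t | ∀ j, 1 - e j * t ∈ Complex.slitPlane}

/-- The widest strip around the line `ℝ / e i` avoiding the cuts attached to the other branch
points. -/
def strip (e : ι → ℂ) (i : ι) : Set ℂ :=
  {t | ∀ j, j ≠ i → |(e i * t).im| < |(e i / e j).im|}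

/-- The branch points `1 / e j` are in general position: no two of them lie on one real line
through the origin, so that the cuts are disjoint. -/
structure IsGeneric (e : ι → ℂ) : Prop where
  ne_zero : ∀ i, e i ≠ 0
  im_div_ne_zero : ∀ ⦃i j⦄, i ≠ j → (e i / e j).im ≠ 0

lemma one_sub_notMem_slitPlane_iff {z : ℂ} :
    1 - z ∉ Complex.slitPlane ↔ ∃ r : ℝ, 1 ≤ r ∧ z = r := by
  rw [Complex.mem_slitPlane_iff, not_or, not_lt, not_not]
  constructor
  · rintro ⟨hre, him⟩
    simp only [Complex.sub_re, Complex.one_re, Complex.sub_im, Complex.one_im] at hre him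
    exact ⟨z.re, by linarith, Complex.ext rfl (by simpa using him)⟩
  · rintro ⟨r, hr, rfl⟩
    simpa using hr

lemma IsGeneric.injective (he : IsGeneric e) : Function.Injective e := by
  intro i j hij
  by_contra hne
  exact he.im_div_ne_zero hne (by rw [hij, div_self (he.ne_zero j), Complex.one_im])

lemma zero_mem_cutPlane (e : ι → ℂ) : (0 : ℂ) ∈ cutPlane e := fun j => by simp

lemma starConvex_cutPlane (e : ι → ℂ) : StarConvex ℝ 0 (cutPlane e) := by
  intro t ht a b ha hb hab j
  have hstar := Complex.starConvex_one_slitPlane (ht j) ha hb hab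
  have hab' : (a : ℂ) + b = 1 := by exact_mod_cast hab
  convert hstar using 1
  simp only [Complex.real_smul]
  linear_combination -hab'

lemma inv_notMem_cutPlane (hi : e i ≠ 0) : (e i)⁻¹ ∉ cutPlane e := fun h => by
  simpa [hi] using h i

lemma zero_mem_strip (he : IsGeneric e) (i : ι) : (0 : ℂ) ∈ strip e i := fun j hj => by
  simpa using he.im_div_ne_zero hj.symm

lemma inv_mem_strip (he : IsGeneric e) (i : ι) : (e i)⁻¹ ∈ strip e i := fun j hj => by
  simpa [he.ne_zero i] using he.im_div_ne_zero hj.symm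

lemma convex_strip (e : ι → ℂ) (i : ι) : Convex ℝ (strip e i) := by
  intro t ht s hs a b ha hb hab j hj
  have him : (e i * (a • t + b • s)).im = a * (e i * t).im + b * (e i * s).im := by
    simp only [Complex.real_smul, Complex.mul_im, Complex.mul_re, Complex.add_im, Complex.add_re,
      Complex.ofReal_re, Complex.ofReal_im]
    ring
  have hball := convex_ball (0 : ℝ) |(e i / e j).im|
  simp only [him]
  simpa using hball (by simpa using ht j hj) (by simpa using hs j hj) ha hb hab

lemma mem_slitPlane_of_mem_strip (ht : t ∈ strip e i) (hj : j ≠ i) :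
    1 - e j * t ∈ Complex.slitPlane := by
  by_contra hcut
  obtain ⟨r, hr, hrt⟩ := one_sub_notMem_slitPlane_iff.1 hcut
  have hej : e j ≠ 0 := fun h => by
    rw [h, zero_mul, eq_comm, Complex.ofReal_eq_zero] at hrt
    linarith
  have hscale : e i * t = r * (e i / e j) := by rw [← hrt]; field_simp
  have hlt := ht j hj
  rw [hscale, Complex.im_ofReal_mul, abs_mul, abs_of_pos (one_pos.trans_le hr)] at hlt
  exact hlt.not_ge (le_mul_of_one_le_left (abs_nonneg _) hr)

lemma mem_strip_of_notMem_slitPlane (he : IsGeneric e) (ht : 1 - e i * t ∉ Complex.slitPlane) :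
    t ∈ strip e i := fun j hj => by
  obtain ⟨r, -, hr⟩ := one_sub_notMem_slitPlane_iff.1 ht
  simpa [hr] using he.im_div_ne_zero hj.symm

variable [Finite ι]

lemma isOpen_setOf_mem_cutPlane : IsOpen {p : (ι → ℂ) × ℂ | p.2 ∈ cutPlane p.1} := by
  have hinter : {p : (ι → ℂ) × ℂ | p.2 ∈ cutPlane p.1} =
      ⋂ j, (fun p => 1 - p.1 j * p.2) ⁻¹' Complex.slitPlane := by
    ext p
    simp [cutPlane]
  rw [hinter]
  exact isOpen_iInter_of_finite fun j => Complex.isOpen_slitPlane.preimage (by fun_prop)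

lemma isOpen_cutPlane (e : ι → ℂ) : IsOpen (cutPlane e) :=
  isOpen_setOf_mem_cutPlane.preimage (Continuous.prodMk_right e)

lemma infinite_cutPlane (e : ι → ℂ) : (cutPlane e).Infinite :=
  infinite_of_mem_nhds 0 ((isOpen_cutPlane e).mem_nhds (zero_mem_cutPlane e))

lemma eventually_mem_strip (he : IsGeneric e) (ht : t ∈ strip e i) :
    ∀ᶠ p : (ι → ℂ) × ℂ in 𝓝 (e, t), p.2 ∈ strip p.1 i := by
  simp only [strip, mem_ofPred_eq, eventually_all]
  intro j hj
  have hdiv : ContinuousAt (fun p : (ι → ℂ) × ℂ => p.1 i / p.1 j) (e, t) :=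
    ContinuousAt.div (by fun_prop) (by fun_prop) (he.ne_zero j)
  have hmul : ContinuousAt (fun p : (ι → ℂ) × ℂ => |(p.1 i * p.2).im|) (e, t) := by fun_prop
  exact hmul.eventually_lt (Complex.continuous_im.continuousAt.comp hdiv).abs (ht j hj)

lemma isOpen_strip (e : ι → ℂ) (i : ι) : IsOpen (strip e i) := by
  simp only [strip, ofPred_forall]
  exact isOpen_iInter_of_finite fun j => isOpen_iInter_of_finite fun _ =>
    isOpen_lt (by fun_prop) (by fun_prop)

lemma eventually_isGeneric (he : IsGeneric e) : ∀ᶠ e' in 𝓝 e, IsGeneric e' := by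
  have hne : ∀ᶠ e' in 𝓝 e, ∀ i, e' i ≠ 0 := eventually_all.2 fun i =>
    (continuous_apply i).continuousAt.eventually_ne (he.ne_zero i)
  have him : ∀ᶠ e' in 𝓝 e, ∀ i j, i ≠ j → (e' i / e' j).im ≠ 0 := by
    simp only [eventually_all]
    intro i j hij
    have hdiv : ContinuousAt (fun e' : ι → ℂ => e' i / e' j) e :=
      (continuous_apply i).continuousAt.div (continuous_apply j).continuousAt (he.ne_zero j)
    exact (Complex.continuous_im.continuousAt.comp hdiv).eventually_ne (he.im_div_ne_zero hij)
  filter_upwards [hne, him] with e' hne him using ⟨hne, him⟩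

lemma exists_differentiable_of_eqOn_strip (he : IsGeneric e) {f : ℂ → ℂ} {g : ι → ℂ → ℂ}
    (hf : DifferentiableOn ℂ f (cutPlane e)) (hg : ∀ i, DifferentiableOn ℂ (g i) (strip e i))
    (hfg : ∀ i, EqOn f (g i) (strip e i ∩ cutPlane e)) :
    ∃ T : ℂ → ℂ, Differentiable ℂ T ∧ EqOn T f (cutPlane e) ∧
      ∀ i, EqOn T (g i) (strip e i) := by
  classical
  have hcut {t : ℂ} (ht : t ∉ cutPlane e) : ∃ i, 1 - e i * t ∉ Complex.slitPlane :=
    not_forall.1 ht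
  let T : ℂ → ℂ := fun t => if ht : t ∈ cutPlane e then f t else g (hcut ht).choose t
  have hTf : EqOn T f (cutPlane e) := fun t ht => dif_pos ht
  have hTg : ∀ i, EqOn T (g i) (strip e i) := by
    intro i t ht
    by_cases htΩ : t ∈ cutPlane e
    · exact (hTf htΩ).trans (hfg i ⟨ht, htΩ⟩)
    · have hi : (hcut htΩ).choose = i := by
        by_contra hne
        exact (hcut htΩ).choose_spec (mem_slitPlane_of_mem_strip ht hne)
      simp only [T, dif_neg htΩ, hi]
  refine ⟨T, fun t => ?_, hTf, hTg⟩
  by_cases htΩ : t ∈ cutPlane e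
  · have hnhds := (isOpen_cutPlane e).mem_nhds htΩ
    exact (hf.differentiableAt hnhds).congr_of_eventuallyEq (hTf.eventuallyEq_of_mem hnhds)
  · obtain ⟨i, hi⟩ := hcut htΩ
    have hnhds := (isOpen_strip e i).mem_nhds (mem_strip_of_notMem_slitPlane he hi)
    exact ((hg i).differentiableAt hnhds).congr_of_eventuallyEq ((hTg i).eventuallyEq_of_mem hnhds)

end CutPlane

section Radical

variable {ι : Type*} {J : Finset ι} {e : ι → ℂ} {t : ℂ}

lemma complexSqrt_ne_zero {z : ℂ} (hz : z ∈ Complex.slitPlane) : Complex.sqrt z ≠ 0 := fun h =>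
  Complex.slitPlane_ne_zero hz (by rw [← complexSqrt_sq z, h, zero_pow two_ne_zero])

lemma analyticAt_complexSqrt {z : ℂ} (hz : z ∈ Complex.slitPlane) :
    AnalyticAt ℂ Complex.sqrt z :=
  analyticAt_id.cpow analyticAt_const hz

lemma hasDerivAt_complexSqrt {z : ℂ} (hz : z ∈ Complex.slitPlane) :
    HasDerivAt Complex.sqrt (2 * Complex.sqrt z)⁻¹ z := by
  have hsqrt := (Complex.differentiableAt_sqrt hz).hasDerivAt
  have hpow := hsqrt.pow 2
  rw [show Complex.sqrt ^ 2 = id from funext complexSqrt_sq] at hpow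
  have hmul : 2 * Complex.sqrt z * deriv Complex.sqrt z = 1 := by
    simpa using hpow.unique (hasDerivAt_id z)
  rwa [eq_inv_of_mul_eq_one_right hmul] at hsqrt

/-- The branch `∏ √(1 - e j * t)`, over `j ∈ J`, of the square root of `∏ (1 - e j * t)` taking
the value `1` at the origin. -/
noncomputable def radical (J : Finset ι) (e : ι → ℂ) (t : ℂ) : ℂ :=
  ∏ j ∈ J, Complex.sqrt (1 - e j * t)

lemma radical_sq (J : Finset ι) (e : ι → ℂ) (t : ℂ) :
    radical J e t ^ 2 = ∏ j ∈ J, (1 - e j * t) := by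
  simp only [radical, ← Finset.prod_pow, complexSqrt_sq]

lemma radical_ne_zero (ht : ∀ j ∈ J, 1 - e j * t ∈ Complex.slitPlane) :
    radical J e t ≠ 0 :=
  Finset.prod_ne_zero_iff.2 fun j hj => complexSqrt_ne_zero (ht j hj)

lemma differentiableAt_radical (ht : ∀ j ∈ J, 1 - e j * t ∈ Complex.slitPlane) :
    DifferentiableAt ℂ (radical J e) t := by
  refine DifferentiableAt.fun_finsetProd fun j hj => ?_
  have hlin : DifferentiableAt ℂ (fun t => 1 - e j * t) t := by fun_prop
  exact (hasDerivAt_complexSqrt (ht j hj)).differentiableAt.comp t hlin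

end Radical

section AbelianIntegral

variable {ι : Type} {d : ℕ}

/-- Coordinates `(e, q, c)` for an abelian integral `c + ∫ Q / √∏ (1 - e j * t)`: the reciprocals
`e j` of the branch points, the coefficients `q` of the numerator `Q`, and the constant `c`. -/
abbrev IntegralData (ι : Type) (d : ℕ) : Type :=
  (ι → ℂ) × (Fin d → ℂ) × ℂ

/-- The integrand `Q / √∏ (1 - e j * t)` of an abelian integral, keeping only the branch points
with index in `J`. -/
noncomputable def integrand (J : Finset ι) (x : IntegralData ι d) (t : ℂ) : ℂ :=
  (ofFn d x.2.1).eval t / radical J x.1 t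

variable {x : IntegralData ι d} {i : ι} {t : ℂ}

lemma analyticAt_integrand [Fintype ι] {J : Finset ι}
    (ht : ∀ j ∈ J, 1 - x.1 j * t ∈ Complex.slitPlane) :
    AnalyticAt ℂ (fun p : IntegralData ι d × ℂ => integrand J p.1 p.2) (x, t) := by
  simp only [integrand, eval_ofFn]
  refine AnalyticAt.div (ContDiffAt.analyticAt (by fun_prop)) ?_ (radical_ne_zero ht)
  refine Finset.analyticAt_fun_prod _ fun j hj => ?_
  have hlin : AnalyticAt ℂ (fun p : IntegralData ι d × ℂ => 1 - p.1.1 j * p.2) (x, t) :=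
    ContDiffAt.analyticAt (by fun_prop)
  exact AnalyticAt.comp_of_eq (analyticAt_complexSqrt (ht j hj)) hlin rfl

lemma analyticAt_integrand_right [Finite ι] {J : Finset ι}
    (ht : ∀ j ∈ J, 1 - x.1 j * t ∈ Complex.slitPlane) : AnalyticAt ℂ (integrand J x) t := by
  cases nonempty_fintype ι
  exact (analyticAt_integrand ht).comp (f := fun t => (x, t)) (analyticAt_const.prod analyticAt_id)

variable [Fintype ι]

/-- The abelian integral `c + ∫ Q / √∏ (1 - e j * t)` with base point `0`, on the cut plane. -/
noncomputable def abelianIntegral (x : IntegralData ι d) (t : ℂ) : ℂ :=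
  x.2.2 + t * segmentMean 1 (integrand Finset.univ x) 0 t

lemma abelianIntegral_zero (x : IntegralData ι d) : abelianIntegral x 0 = x.2.2 := by
  simp [abelianIntegral]

lemma contDiffAt_abelianIntegral (m : ℕ) (ht : t ∈ cutPlane x.1) :
    ContDiffAt ℂ m (fun p : IntegralData ι d × ℂ => abelianIntegral p.1 p.2) (x, t) := by
  have hmean := contDiffAt_segmentMean (n := 1) m (x := x) (t := t)
    (h := fun p => integrand Finset.univ p.1 p.2) (analyticAt_const (v := 0)) fun z hz =>
      analyticAt_integrand fun j _ => (starConvex_cutPlane x.1).segment_subset ht hz j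
  unfold abelianIntegral
  fun_prop

lemma hasDerivAt_abelianIntegral (ht : t ∈ cutPlane x.1) :
    HasDerivAt (abelianIntegral x) (integrand Finset.univ x t) t := by
  obtain ⟨D, hD, hode⟩ := exists_hasDerivAt_segmentMean 1 (h := integrand Finset.univ x) (a := 0)
    (t := t) fun z hz => analyticAt_integrand_right fun j _ =>
      (starConvex_cutPlane x.1).segment_subset ht hz j
  refine (((hasDerivAt_id t).mul hD).const_add x.2.2).congr_deriv ?_
  simp only [id]
  push_cast at hode
  linear_combination hode

variable [DecidableEq ι]

/-- The function `K`, holomorphic on the `i`-th strip, such that the abelian integral is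
`branchValue i x + √(1 - e i * t) * K t` there. -/
noncomputable def regularPart (i : ι) (x : IntegralData ι d) (t : ℂ) : ℂ :=
  -2 / x.1 i * segmentMean 2 (integrand (Finset.univ.erase i) x) (x.1 i)⁻¹ t

/-- The value of the abelian integral at the branch point `1 / e i`. -/
noncomputable def branchValue (i : ι) (x : IntegralData ι d) : ℂ :=
  x.2.2 - regularPart i x 0

lemma mem_slitPlane_of_mem_segment_inv (he : IsGeneric x.1) (ht : t ∈ strip x.1 i) :
    ∀ z ∈ segment ℝ (x.1 i)⁻¹ t, ∀ j ∈ Finset.univ.erase i, 1 - x.1 j * z ∈ Complex.slitPlane :=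
  fun _ hz _ hj => mem_slitPlane_of_mem_strip
    ((convex_strip x.1 i).segment_subset (inv_mem_strip he i) ht hz) (Finset.ne_of_mem_erase hj)

lemma contDiffAt_regularPart (m : ℕ) (he : IsGeneric x.1) (ht : t ∈ strip x.1 i) :
    ContDiffAt ℂ m (fun p : IntegralData ι d × ℂ => regularPart i p.1 p.2) (x, t) := by
  have hmean := contDiffAt_segmentMean (n := 2) m (x := x) (t := t)
    (h := fun p => integrand (Finset.univ.erase i) p.1 p.2) (a := fun x => (x.1 i)⁻¹)
    (AnalyticAt.inv (ContDiffAt.analyticAt (by fun_prop)) (he.ne_zero i)) fun z hz =>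
      analyticAt_integrand (mem_slitPlane_of_mem_segment_inv he ht z hz)
  have hcoef : ContDiffAt ℂ m (fun p : IntegralData ι d × ℂ => -2 / p.1.1 i) (x, t) :=
    contDiffAt_const.div (by fun_prop) (he.ne_zero i)
  exact hcoef.mul hmean

lemma contDiffAt_branchValue (m : ℕ) (he : IsGeneric x.1) :
    ContDiffAt ℂ m (branchValue i) x := by
  have hreg : ContDiffAt ℂ m (fun y : IntegralData ι d => regularPart i y 0) x :=
    (contDiffAt_regularPart m he (zero_mem_strip he i)).comp x
      (f := fun y => (y, (0 : ℂ))) (by fun_prop)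
  unfold branchValue
  fun_prop

lemma differentiableAt_branchValue (he : IsGeneric x.1) :
    DifferentiableAt ℂ (branchValue (d := d) i) x :=
  (contDiffAt_branchValue 1 he).differentiableAt one_ne_zero

lemma exists_hasDerivAt_regularPart (he : IsGeneric x.1) (ht : t ∈ strip x.1 i) :
    ∃ D, HasDerivAt (regularPart i x) D t ∧ (1 - x.1 i * t) * D =
      integrand (Finset.univ.erase i) x t + x.1 i / 2 * regularPart i x t := by
  have hi := he.ne_zero i
  obtain ⟨D, hD, hode⟩ := exists_hasDerivAt_segmentMean 2
    (h := integrand (Finset.univ.erase i) x) (a := (x.1 i)⁻¹) (t := t) fun z hz =>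
      analyticAt_integrand_right (mem_slitPlane_of_mem_segment_inv he ht z hz)
  refine ⟨_, hD.const_mul (-2 / x.1 i), ?_⟩
  rw [← hode, regularPart]
  field_simp
  push_cast
  ring

lemma differentiableAt_regularPart (he : IsGeneric x.1) (ht : t ∈ strip x.1 i) :
    DifferentiableAt ℂ (regularPart i x) t :=
  (exists_hasDerivAt_regularPart he ht).choose_spec.1.differentiableAt

lemma sqrt_mul_integrand (ht : 1 - x.1 i * t ∈ Complex.slitPlane) :
    Complex.sqrt (1 - x.1 i * t) * integrand Finset.univ x t =
      integrand (Finset.univ.erase i) x t := by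
  have hsqrt := complexSqrt_ne_zero ht
  rw [integrand, integrand, radical, ← Finset.mul_prod_erase Finset.univ _ (Finset.mem_univ i),
    ← radical]
  field_simp

lemma abelianIntegral_eq (he : IsGeneric x.1) (ht : t ∈ strip x.1 i ∩ cutPlane x.1) :
    abelianIntegral x t = branchValue i x + Complex.sqrt (1 - x.1 i * t) * regularPart i x t := by
  set U := strip x.1 i ∩ cutPlane x.1
  set f : ℂ → ℂ := fun t =>
    abelianIntegral x t - Complex.sqrt (1 - x.1 i * t) * regularPart i x t with hf
  have hU_zero : (0 : ℂ) ∈ U := ⟨zero_mem_strip he i, zero_mem_cutPlane x.1⟩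
  have hU_conn : IsPreconnected U := (((convex_strip x.1 i).starConvex hU_zero.1).inter
    (starConvex_cutPlane x.1)).isPathConnected hU_zero |>.isConnected.isPreconnected
  have hderiv : ∀ z ∈ U, HasDerivAt f 0 z := by
    intro z hz
    obtain ⟨D, hD, hode⟩ := exists_hasDerivAt_regularPart he hz.1
    have hlin : HasDerivAt (fun t => 1 - x.1 i * t) (-x.1 i) z := by
      simpa using ((hasDerivAt_id z).const_mul (x.1 i)).const_sub 1
    refine ((hasDerivAt_abelianIntegral hz.2).sub
      (((hasDerivAt_complexSqrt (hz.2 i)).comp z hlin).mul hD)).congr_deriv ?_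
    have hsqrt := complexSqrt_ne_zero (hz.2 i)
    have hcancel := sqrt_mul_integrand (hz.2 i)
    have hsq := complexSqrt_sq (1 - x.1 i * z)
    rw [Function.comp_apply]
    field_simp
    linear_combination 2 * hcancel - 2 * hode - 2 * D * hsq
  have hU_open : IsOpen U := (isOpen_strip x.1 i).inter (isOpen_cutPlane x.1)
  have hconst : f t = f 0 := hU_open.is_const_of_deriv_eq_zero hU_conn
    (fun z hz => (hderiv z hz).differentiableAt.differentiableWithinAt)
    (fun z hz => (hderiv z hz).deriv) ht hU_zero
  simp only [hf, mul_zero, sub_zero, Complex.sqrt_one, one_mul, abelianIntegral_zero] at hconst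
  rw [branchValue]
  linear_combination hconst

end AbelianIntegral

section Growth

lemma dense_setOf_forall_im_ne_zero {κ : Type*} [Finite κ] {α β : κ → ℂ} (hα : ∀ k, α k ≠ 0) :
    Dense {z : ℂ | ∀ k, (α k * z + β k).im ≠ 0} := by
  have hinter : {z : ℂ | ∀ k, (α k * z + β k).im ≠ 0} =
      ⋂ k, (fun z => (α k * z + β k).im) ⁻¹' {0}ᶜ := by
    ext z
    simp
  rw [hinter]
  refine dense_iInter_of_isOpen (fun k => isOpen_compl_singleton.preimage (by fun_prop)) fun k => ?_
  have hlin : IsOpenMap fun z => α k * z + β k :=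
    ((Homeomorph.mulLeft₀ (α k) (hα k)).trans (Homeomorph.addRight (β k))).isOpenMap
  exact (dense_compl_singleton 0).preimage (Complex.isOpenMap_im.comp hlin)

lemma isBigOWith_cobounded_of_dense {f g : ℂ → ℂ} {S : Set ℂ} {C : ℝ} (hf : Continuous f)
    (hg : Continuous g) (hS : Dense S) (h : IsBigOWith C (Bornology.cobounded ℂ ⊓ 𝓟 S) f g) :
    IsBigOWith C (Bornology.cobounded ℂ) f g := by
  obtain ⟨R, -, hR⟩ :=
    hasBasis_cobounded_norm.eventually_iff.1 (eventually_inf_principal.1 h.bound)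
  refine .of_bound (hasBasis_cobounded_norm.eventually_iff.2 ⟨R + 1, trivial, fun z hz => ?_⟩)
  have hclosed : IsClosed {z | ‖f z‖ ≤ C * ‖g z‖} := isClosed_le (by fun_prop) (by fun_prop)
  have hopen : IsOpen {z : ℂ | R < ‖z‖} := isOpen_lt (by fun_prop) (by fun_prop)
  refine closure_minimal (fun z hz => hR (mem_ofPred.1 hz.1).le hz.2) hclosed
    (hS.open_subset_closure_inter hopen ?_)
  exact (lt_add_one R).trans_le hz

lemma norm_sub_comp_radial_le {S : Set ℂ} {H h : ℂ → ℂ} (hS : StarConvex ℝ 0 S)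
    (hH : ∀ z ∈ S, HasDerivAt H (h z) z) {C R : ℝ} (hR : 0 < R)
    (hC : ∀ z ∈ S, R ≤ ‖z‖ → ‖h z‖ ≤ C * ‖z⁻¹‖) {z : ℂ} (hzS : z ∈ S) (hz : R ≤ ‖z‖) :
    ‖H z - H ((R / ‖z‖ : ℝ) * z)‖ ≤ C * Real.log (‖z‖ / R) := by
  have hz_pos : 0 < ‖z‖ := hR.trans_le hz
  set l := Real.log (R / ‖z‖)
  have hl_exp : Real.exp l = R / ‖z‖ := Real.exp_log (by positivity)
  have hl_nonpos : l ≤ 0 := Real.log_nonpos (by positivity) ((div_le_one hz_pos).2 hz)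
  have hmem : ∀ s ∈ Icc l 0, (Real.exp s : ℂ) * z ∈ S := fun s hs => by
    simpa using hS.smul_mem hzS (Real.exp_pos s).le (Real.exp_le_one_iff.2 hs.2)
  -- In the logarithmic radial coordinate `s = log (r / ‖z‖)` the derivative is bounded by `C`.
  have hderiv : ∀ s ∈ Icc l 0, HasDerivWithinAt (fun s : ℝ => H (Real.exp s * z))
      (h (Real.exp s * z) * (Real.exp s * z)) (Icc l 0) s := by
    intro s hs
    have hexp : HasDerivAt (fun s : ℝ => (Real.exp s : ℂ) * z) (Real.exp s * z) s :=
      (Real.hasDerivAt_exp s).ofReal_comp.mul_const z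
    exact ((hH _ (hmem s hs)).comp s hexp).hasDerivWithinAt
  have hbound : ∀ s ∈ Icc l 0, ‖h (Real.exp s * z) * (Real.exp s * z)‖ ≤ C := by
    intro s hs
    have hlarge : R ≤ ‖(Real.exp s : ℂ) * z‖ := by
      rw [norm_mul, Complex.norm_real, Real.norm_of_nonneg (Real.exp_pos s).le,
        ← div_le_iff₀ hz_pos, ← hl_exp]
      exact Real.exp_le_exp.2 hs.1
    rw [norm_mul, ← le_div_iff₀ (hR.trans_le hlarge), div_eq_mul_inv, ← norm_inv]
    exact hC _ (hmem s hs) hlarge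
  have hmean := (convex_Icc l 0).norm_image_sub_le_of_norm_hasDerivWithin_le hderiv hbound
    (left_mem_Icc.2 hl_nonpos) (right_mem_Icc.2 hl_nonpos)
  rw [hl_exp, Real.exp_zero, Complex.ofReal_one, one_mul, zero_sub, norm_neg,
    Real.norm_of_nonpos hl_nonpos] at hmean
  rwa [← inv_div R, Real.log_inv]

lemma eventually_isBigO_log_sub_radial {S : Set ℂ} {H h : ℂ → ℂ} (hS : StarConvex ℝ 0 S)
    (hH : ∀ z ∈ S, HasDerivAt H (h z) z)
    (hh : h =O[Bornology.cobounded ℂ ⊓ 𝓟 S] fun z => z⁻¹) :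
    ∀ᶠ R : ℝ in atTop, (fun z => H z - H ((R / ‖z‖ : ℝ) * z))
      =O[Bornology.cobounded ℂ ⊓ 𝓟 S] fun z => Real.log ‖z‖ := by
  obtain ⟨C, hC₀, hC⟩ := hh.exists_nonneg
  obtain ⟨R₀, -, hR₀⟩ :=
    hasBasis_cobounded_norm.eventually_iff.1 (eventually_inf_principal.1 hC.bound)
  filter_upwards [eventually_ge_atTop R₀, eventually_ge_atTop 1] with R hR hR1
  have hR_pos : 0 < R := one_pos.trans_le hR1
  refine IsBigO.of_bound C (eventually_inf_principal.2
    (hasBasis_cobounded_norm.eventually_iff.2 ⟨R, trivial, fun z hz hzS => ?_⟩))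
  rw [mem_ofPred_eq] at hz
  refine (norm_sub_comp_radial_le hS hH hR_pos (fun z hzS hz => hR₀ (hR.trans hz) hzS) hzS
    hz).trans (mul_le_mul_of_nonneg_left ?_ hC₀)
  rw [Real.log_div (hR_pos.trans_le hz).ne' hR_pos.ne',
    Real.norm_of_nonneg (Real.log_nonneg (hR1.trans hz))]
  exact sub_le_self _ (Real.log_nonneg hR1)

lemma isBigO_one_comp_radial (F : Type*) [Norm F] [One F] [NormOneClass F] {S : Set ℂ}
    (hS : StarConvex ℝ 0 S) {R M : ℝ} (hR : 0 < R) {u : ℂ → ℂ}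
    (hu : ∀ z ∈ Metric.sphere 0 R ∩ S, ‖u z‖ ≤ M) :
    (fun z => u ((R / ‖z‖ : ℝ) * z)) =O[Bornology.cobounded ℂ ⊓ 𝓟 S] fun _ => (1 : F) := by
  refine IsBigO.of_bound M (eventually_inf_principal.2
    (hasBasis_cobounded_norm.eventually_iff.2 ⟨R, trivial, fun z hz hzS => ?_⟩))
  rw [mem_ofPred_eq] at hz
  have hz_pos : 0 < ‖z‖ := hR.trans_le hz
  have hmem : ((R / ‖z‖ : ℝ) : ℂ) * z ∈ S := by
    simpa using hS.smul_mem hzS (by positivity) ((div_le_one hz_pos).2 hz)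
  have hnorm : ‖((R / ‖z‖ : ℝ) : ℂ) * z‖ = R := by
    rw [norm_mul, Complex.norm_real, Real.norm_of_nonneg (by positivity),
      div_mul_cancel₀ _ hz_pos.ne']
  simpa using hu _ ⟨mem_sphere_zero_iff_norm.2 hnorm, hmem⟩

lemma isTheta_one_sub_mul {e : ℂ} (he : e ≠ 0) :
    (fun z => 1 - e * z) =Θ[Bornology.cobounded ℂ] fun z => z := by
  have hlin : (fun z => -(e * z)) =Θ[Bornology.cobounded ℂ] fun z : ℂ => z := by
    simpa only [neg_mul] using (isTheta_refl _ _).const_mul_left (neg_ne_zero.2 he)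
  have hconst : (fun _ => (1 : ℂ)) =o[Bornology.cobounded ℂ] fun z => -(e * z) :=
    (isLittleO_const_id_cobounded 1).trans_isTheta hlin.symm
  simp only [sub_eq_add_neg]
  exact hconst.right_isTheta_add.symm.trans hlin

lemma dense_cutPlane {ι : Type*} [Finite ι] {e : ι → ℂ} (he : ∀ i, e i ≠ 0) :
    Dense (cutPlane e) := by
  refine (dense_setOf_forall_im_ne_zero (β := 0) he).mono fun z hz j =>
    Complex.mem_slitPlane_iff.2 (Or.inr ?_)
  rw [Complex.sub_im, Complex.one_im, zero_sub, neg_ne_zero]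
  simpa only [Pi.zero_apply, add_zero] using hz j

variable {ι : Type*} {d : ℕ} [Fintype ι]

lemma isTheta_radical {e : ι → ℂ} (he : ∀ i, e i ≠ 0) (hcard : Fintype.card ι = 2 * d) :
    radical Finset.univ e =Θ[Bornology.cobounded ℂ] fun z => z ^ d := by
  have hsq : (fun z => radical Finset.univ e z ^ 2) =Θ[Bornology.cobounded ℂ]
      fun z => (z ^ d) ^ 2 := by
    have hprod := IsTheta.finsetProd (s := Finset.univ) fun i _ => isTheta_one_sub_mul (he i)
    simp only [radical_sq]
    simpa [hcard, ← pow_mul, mul_comm] using hprod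
  exact ⟨hsq.1.of_pow two_ne_zero, hsq.2.of_pow two_ne_zero⟩

end Growth

section Variation

lemma hasDerivAt_fderiv_apply {E : Type*} [NormedAddCommGroup E] [NormedSpace ℂ E]
    {G : E × ℂ → ℂ} {x : E} {t : ℂ} (hG : ContDiffAt ℂ 2 G (x, t)) (v : E) :
    HasDerivAt (fun s => fderiv ℂ (fun y => G (y, s)) x v)
      (fderiv ℂ (fun y => deriv (fun s => G (y, s)) t) x v) t := by
  have hdiff : ∀ᶠ p in 𝓝 (x, t), DifferentiableAt ℂ G p :=
    (hG.eventually (by simp)).mono fun p hp => hp.differentiableAt two_ne_zero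
  have hfderiv : HasFDerivAt (fderiv ℂ G) (fderiv ℂ (fderiv ℂ G) (x, t)) (x, t) :=
    ((hG.fderiv_right (m := 1) (by norm_num)).differentiableAt one_ne_zero).hasFDerivAt
  have hsymm : IsSymmSndFDerivAt ℂ G (x, t) := hG.isSymmSndFDerivAt (by simp)
  have hleft (s : ℂ) : HasFDerivAt (fun y : E => (y, s)) (.inl ℂ E ℂ) x :=
    hasFDerivAt_prodMk_left x s
  have hright (y : E) : HasDerivAt (fun s : ℂ => (y, s)) (0, 1) t :=
    (hasDerivAt_const t y).prodMk (hasDerivAt_id t)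
  have hpartial : (fun s => fderiv ℂ (fun y => G (y, s)) x v) =ᶠ[𝓝 t]
      fun s => fderiv ℂ G (x, s) (v, 0) := by
    filter_upwards [(Continuous.prodMk_right x).continuousAt.eventually hdiff] with s hs
    exact congr($((hs.hasFDerivAt.comp x (hleft s)).fderiv) v)
  have hderiv : (fun y => deriv (fun s => G (y, s)) t) =ᶠ[𝓝 x]
      fun y => fderiv ℂ G (y, t) (0, 1) := by
    filter_upwards [(Continuous.prodMk_left t).continuousAt.eventually hdiff] with y hy
    exact (hy.hasFDerivAt.comp_hasDerivAt t (hright y)).deriv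
  have hmixed : fderiv ℂ (fun y => deriv (fun s => G (y, s)) t) x v =
      fderiv ℂ (fderiv ℂ G) (x, t) (v, 0) (0, 1) := by
    have hcomp := (hfderiv.comp x (hleft t)).clm_apply (hasFDerivAt_const ((0 : E), (1 : ℂ)) x)
    simp only [Function.comp_apply] at hcomp
    rw [hderiv.fderiv_eq, hcomp.fderiv]
    simp
  rw [hmixed, hsymm]
  refine HasDerivAt.congr_of_eventuallyEq ?_ hpartial
  simpa using (hfderiv.comp_hasDerivAt t (hright x)).clm_apply (hasDerivAt_const t (v, (0 : ℂ)))

variable {ι : Type} {d : ℕ} {i : ι} {t : ℂ}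

lemma hasLineDerivAt_complexSqrt_one_sub {e : ι → ℂ} (u : ι → ℂ)
    (ht : 1 - e i * t ∈ Complex.slitPlane) :
    HasLineDerivAt ℂ (fun e => Complex.sqrt (1 - e i * t))
      (-(u i * t) / (2 * Complex.sqrt (1 - e i * t))) e u := by
  have hlin : HasDerivAt (fun s : ℂ => 1 - (e + s • u) i * t) (-(u i * t)) 0 := by
    simpa using
      ((((hasDerivAt_id (0 : ℂ)).mul_const (u i)).const_add (e i)).mul_const t).const_sub 1
  exact ((hasDerivAt_complexSqrt ht).comp_of_eq 0 hlin (by simp)).congr_deriv (by ring)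

lemma hasLineDerivAt_radical {J : Finset ι} {e : ι → ℂ} (u : ι → ℂ)
    (ht : ∀ j ∈ J, 1 - e j * t ∈ Complex.slitPlane) :
    HasLineDerivAt ℂ (fun e => radical J e t)
      (-(radical J e t * ∑ j ∈ J, u j * t / (2 * (1 - e j * t)))) e u := by
  classical
  refine (HasDerivAt.fun_finsetProd fun j hj =>
    hasLineDerivAt_complexSqrt_one_sub u (ht j hj)).congr_deriv ?_
  rw [Finset.mul_sum, ← Finset.sum_neg_distrib]
  refine Finset.sum_congr rfl fun j hj => ?_
  have : Complex.sqrt (1 - e j * t) ≠ 0 := complexSqrt_ne_zero (ht j hj)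
  simp only [zero_smul, add_zero, smul_eq_mul]
  rw [radical, ← Finset.mul_prod_erase J _ hj]
  nth_rewrite 3 [← complexSqrt_sq (1 - e j * t)]
  generalize ∏ k ∈ J.erase j, Complex.sqrt (1 - e k * t) = ρ
  field_simp

variable [Fintype ι] {x v : IntegralData ι d}

lemma isBigO_integrand {x : IntegralData ι d} (he : ∀ i, x.1 i ≠ 0)
    (hcard : Fintype.card ι = 2 * d) :
    integrand Finset.univ x =O[Bornology.cobounded ℂ] fun z => z⁻¹ := by
  have hnum : (fun z => (ofFn d x.2.1).eval z * z) =O[Bornology.cobounded ℂ] fun z => z ^ d := by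
    simp only [eval_ofFn, Finset.sum_mul, mul_assoc, ← pow_succ]
    refine IsBigO.fun_sum fun j _ => IsBigO.const_mul_left ?_ _
    exact isBigO_pow_pow_cobounded_of_le j.isLt
  obtain ⟨C, hC₀, hC⟩ := (hnum.trans_isTheta (isTheta_radical he hcard).symm).exists_nonneg
  refine IsBigO.of_bound C ?_
  filter_upwards [hC.bound, Bornology.eventually_ne_cobounded 0] with z hz hz₀
  rw [norm_mul, ← le_div_iff₀ (norm_pos_iff.2 hz₀), div_eq_mul_inv, ← norm_inv] at hz
  rw [integrand, norm_div]
  exact div_le_of_le_mul₀ (norm_nonneg _) (by positivity) (hz.trans_eq (mul_right_comm _ _ _))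

/-- The derivative of the abelian integral at `t` as its data `x` move in the direction `v`. -/
noncomputable def variation (x v : IntegralData ι d) (t : ℂ) : ℂ :=
  fderiv ℂ (fun y => abelianIntegral y t) x v

lemma variation_zero (x v : IntegralData ι d) : variation x v 0 = v.2.2 := by
  simp only [variation, abelianIntegral_zero]
  have hconst : HasFDerivAt (fun y : IntegralData ι d => y.2.2)
    ((ContinuousLinearMap.snd ℂ _ ℂ).comp (ContinuousLinearMap.snd ℂ _ _)) x := by fun_prop
  rw [hconst.fderiv]
  rfl

/-- The derivative of the integrand `Q / √∏ (1 - e j * t)` as the data `x` move in the direction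
`v`. -/
noncomputable def integrandVariation (x v : IntegralData ι d) (t : ℂ) : ℂ :=
  integrand Finset.univ (x.1, v.2) t +
    integrand Finset.univ x t * ∑ j, v.1 j * t / (2 * (1 - x.1 j * t))

lemma hasLineDerivAt_integrand (ht : t ∈ cutPlane x.1) :
    HasLineDerivAt ℂ (fun y => integrand Finset.univ y t) (integrandVariation x v t) x v := by
  have hrad : HasDerivAt (fun s : ℂ => radical Finset.univ (x.1 + s • v.1) t) _ 0 :=
    hasLineDerivAt_radical v.1 fun j _ => ht j
  have hnum : HasDerivAt (fun s : ℂ => (ofFn d (x.2.1 + s • v.2.1)).eval t)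
      ((ofFn d v.2.1).eval t) 0 := by
    simp only [map_add, map_smul, eval_add, eval_smul, smul_eq_mul]
    simpa using ((hasDerivAt_id (0 : ℂ)).mul_const ((ofFn d v.2.1).eval t)).const_add
      ((ofFn d x.2.1).eval t)
  have hne : radical Finset.univ x.1 t ≠ 0 := radical_ne_zero fun j _ => ht j
  refine (hnum.div hrad (by simpa using hne)).congr_deriv ?_
  simp only [integrandVariation, integrand, zero_smul, add_zero]
  generalize ∑ j, v.1 j * t / (2 * (1 - x.1 j * t)) = σ
  field_simp
  ring

lemma hasDerivAt_variation (ht : t ∈ cutPlane x.1) :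
    HasDerivAt (variation x v) (integrandVariation x v t) t := by
  have hopen : ∀ᶠ y in 𝓝 x, t ∈ cutPlane y.1 :=
    ((isOpen_setOf_mem_cutPlane.preimage
      (f := fun y : IntegralData ι d => (y.1, t)) (by fun_prop)).mem_nhds ht)
  have hderiv : (fun y => deriv (abelianIntegral y) t) =ᶠ[𝓝 x]
      fun y => integrand Finset.univ y t :=
    hopen.mono fun y hy => (hasDerivAt_abelianIntegral hy).deriv
  have hdiff : DifferentiableAt ℂ (fun y : IntegralData ι d => integrand Finset.univ y t) x :=
    ((analyticAt_integrand fun j _ => ht j).differentiableAt).comp x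
      (f := fun y => (y, t)) (by fun_prop)
  have hswap := hasDerivAt_fderiv_apply (contDiffAt_abelianIntegral 2 ht) v
  refine hswap.congr_deriv ?_
  rw [(hasLineDerivAt_integrand ht).unique (hdiff.hasFDerivAt.hasLineDerivAt v)]
  exact congr($(hderiv.fderiv_eq) v)

lemma isBigO_integrandVariation (he : ∀ i, x.1 i ≠ 0) (hcard : Fintype.card ι = 2 * d) :
    integrandVariation x v =O[Bornology.cobounded ℂ] fun z => z⁻¹ := by
  have hsum : (fun z => ∑ j, v.1 j * z / (2 * (1 - x.1 j * z))) =O[Bornology.cobounded ℂ]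
      fun _ => (1 : ℂ) := by
    refine IsBigO.fun_sum fun j _ => ?_
    have hden : (fun z => v.1 j * z) =O[Bornology.cobounded ℂ] fun z => 2 * (1 - x.1 j * z) :=
      (((isTheta_one_sub_mul (he j)).symm.const_mul_right two_ne_zero).1).const_mul_left _
    exact (div_isBoundedUnder_of_isBigO hden).isBigO_one ℂ
  have hprod := (isBigO_integrand (x := x) he hcard).mul hsum
  simp only [mul_one] at hprod
  exact (isBigO_integrand (x := (x.1, v.2)) he hcard).add hprod

lemma isBigO_log_variation (he : ∀ i, x.1 i ≠ 0) (hcard : Fintype.card ι = 2 * d)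
    {T : ℂ → ℂ} (hT : Continuous T)
    (hTv : EqOn T (fun t => radical Finset.univ x.1 t * variation x v t) (cutPlane x.1)) :
    variation x v =O[Bornology.cobounded ℂ ⊓ 𝓟 (cutPlane x.1)] fun z => Real.log ‖z‖ := by
  obtain ⟨C, hC₀, hC⟩ := (isTheta_radical he hcard).2.exists_nonneg
  obtain ⟨R₀, -, hR₀⟩ := hasBasis_cobounded_norm.eventually_iff.1 hC.bound
  obtain ⟨R, ⟨hradial, hR⟩, hR1⟩ := (((eventually_isBigO_log_sub_radial (starConvex_cutPlane x.1)
    (fun z hz => hasDerivAt_variation (v := v) hz)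
    ((isBigO_integrandVariation he hcard).mono inf_le_left)).and
      (eventually_ge_atTop R₀)).and (eventually_ge_atTop 1)).exists
  obtain ⟨M, hM⟩ := (isCompact_sphere (0 : ℂ) R).exists_bound_of_continuousOn hT.continuousOn
  have hsphere : ∀ z ∈ Metric.sphere 0 R ∩ cutPlane x.1, ‖variation x v z‖ ≤ C * M := by
    rintro z ⟨hz, hzΩ⟩
    have hz_norm : ‖z‖ = R := mem_sphere_zero_iff_norm.1 hz
    have hlower : 1 ≤ C * ‖radical Finset.univ x.1 z‖ := by
      refine le_trans ?_ (hR₀ (hR.trans hz_norm.ge))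
      rw [norm_pow, hz_norm]
      exact one_le_pow₀ hR1
    calc ‖variation x v z‖ ≤ C * ‖radical Finset.univ x.1 z‖ * ‖variation x v z‖ :=
          le_mul_of_one_le_left (norm_nonneg _) hlower
      _ = C * ‖T z‖ := by rw [hTv hzΩ, norm_mul, mul_assoc]
      _ ≤ C * M := mul_le_mul_of_nonneg_left (hM z hz) hC₀
  have hbdd := isBigO_one_comp_radial ℝ (starConvex_cutPlane x.1) (one_pos.trans_le hR1) hsphere
  have hlog : (fun _ => (1 : ℝ)) =O[Bornology.cobounded ℂ ⊓ 𝓟 (cutPlane x.1)]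
      fun z => Real.log ‖z‖ :=
    ((Real.isLittleO_const_log_atTop (c := 1)).comp_tendsto
      (tendsto_norm_cobounded_atTop.mono_left inf_le_left)).isBigO
  simpa using hradial.add (hbdd.trans hlog)

lemma isLittleO_radical_mul_variation (he : ∀ i, x.1 i ≠ 0) (hcard : Fintype.card ι = 2 * d)
    {T : ℂ → ℂ} (hT : Continuous T)
    (hTv : EqOn T (fun t => radical Finset.univ x.1 t * variation x v t) (cutPlane x.1)) :
    T =o[Bornology.cobounded ℂ] fun z => z ^ (d + 1) := by
  have hlog : (fun z => Real.log ‖z‖) =o[Bornology.cobounded ℂ ⊓ 𝓟 (cutPlane x.1)]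
      fun z : ℂ => z :=
    (Real.isLittleO_log_id_atTop.comp_tendsto
      (tendsto_norm_cobounded_atTop.mono_left inf_le_left)).of_norm_right
  have hmul : (fun z => radical Finset.univ x.1 z * variation x v z)
      =o[Bornology.cobounded ℂ ⊓ 𝓟 (cutPlane x.1)] fun z => z ^ d * z :=
    ((isTheta_radical he hcard).1.mono inf_le_left).mul_isLittleO
      ((isBigO_log_variation he hcard hT hTv).trans_isLittleO hlog)
  have hT_cut : T =o[Bornology.cobounded ℂ ⊓ 𝓟 (cutPlane x.1)] fun z => z ^ (d + 1) := by
    simp only [pow_succ]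
    refine hmul.congr' (EventuallyEq.symm ?_) .rfl
    exact eventually_inf_principal.2 (Eventually.of_forall fun z hz => hTv hz)
  exact IsLittleO.of_isBigOWith fun ε hε => isBigOWith_cobounded_of_dense hT (by fun_prop)
    (dense_cutPlane he) (hT_cut.forall_isBigOWith hε)

variable [DecidableEq ι]

lemma differentiableAt_regularPart_left (he : IsGeneric x.1) (ht : t ∈ strip x.1 i) :
    DifferentiableAt ℂ (fun y : IntegralData ι d => regularPart i y t) x :=
  ((contDiffAt_regularPart 1 he ht).differentiableAt one_ne_zero).comp x
    (f := fun y => (y, t)) (by fun_prop)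

lemma eventually_abelianIntegral_eq (he : IsGeneric x.1) (ht : t ∈ strip x.1 i ∩ cutPlane x.1) :
    ∀ᶠ y in 𝓝 x, abelianIntegral y t =
      branchValue i y + Complex.sqrt (1 - y.1 i * t) * regularPart i y t := by
  have hfst : Tendsto (fun y : IntegralData ι d => y.1) (𝓝 x) (𝓝 x.1) :=
    continuous_fst.continuousAt
  have hpair : Tendsto (fun y : IntegralData ι d => (y.1, t)) (𝓝 x) (𝓝 (x.1, t)) :=
    hfst.prodMk_nhds tendsto_const_nhds
  filter_upwards [hfst.eventually (eventually_isGeneric he),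
    hpair.eventually (eventually_mem_strip he ht.1),
    hpair.eventually (isOpen_setOf_mem_cutPlane.mem_nhds ht.2)] with y hy hstrip hcut
  exact abelianIntegral_eq hy ⟨hstrip, hcut⟩

lemma sqrt_mul_variation (he : IsGeneric x.1) (ht : t ∈ strip x.1 i ∩ cutPlane x.1)
    (hv : fderiv ℂ (branchValue i) x v = 0) :
    Complex.sqrt (1 - x.1 i * t) * variation x v t =
      (1 - x.1 i * t) * fderiv ℂ (fun y => regularPart i y t) x v -
        v.1 i * t / 2 * regularPart i x t := by
  have hsqrt : HasDerivAt (fun s : ℂ => Complex.sqrt (1 - (x.1 + s • v.1) i * t)) _ 0 :=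
    hasLineDerivAt_complexSqrt_one_sub v.1 (ht.2 i)
  have hbranch := (differentiableAt_branchValue (d := d) (i := i) he).hasFDerivAt.hasLineDerivAt v
  have hreg := (differentiableAt_regularPart_left he ht.1).hasFDerivAt.hasLineDerivAt v
  have hline : HasLineDerivAt ℂ (fun y : IntegralData ι d => branchValue i y +
    Complex.sqrt (1 - y.1 i * t) * regularPart i y t) _ x v := hbranch.add (hsqrt.mul hreg)
  have hintegral : DifferentiableAt ℂ (fun y => abelianIntegral y t) x :=
    ((contDiffAt_abelianIntegral 1 ht.2).differentiableAt one_ne_zero).comp x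
      (f := fun y => (y, t)) (by fun_prop)
  have heq := (hintegral.hasFDerivAt.hasLineDerivAt v).unique
    (hline.congr_of_eventuallyEq (eventually_abelianIntegral_eq he ht))
  simp only [zero_smul, add_zero, hv, zero_add] at heq
  have hne := complexSqrt_ne_zero (ht.2 i)
  have hsq := complexSqrt_sq (1 - x.1 i * t)
  rw [variation, heq]
  field_simp
  linear_combination 2 * fderiv ℂ (fun y => regularPart i y t) x v * hsq

lemma exists_differentiable_radical_mul_variation (he : IsGeneric x.1)
    (hv : ∀ i, fderiv ℂ (branchValue i) x v = 0) :
    ∃ T : ℂ → ℂ, Differentiable ℂ T ∧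
      EqOn T (fun t => radical Finset.univ x.1 t * variation x v t) (cutPlane x.1) ∧
      ∀ i, EqOn T (fun t => radical (Finset.univ.erase i) x.1 t *
        ((1 - x.1 i * t) * fderiv ℂ (fun y => regularPart i y t) x v -
          v.1 i * t / 2 * regularPart i x t)) (strip x.1 i) := by
  refine exists_differentiable_of_eqOn_strip he (fun t ht => ?_) (fun i t ht => ?_)
    fun i t ht => ?_
  · exact ((differentiableAt_radical fun j _ => ht j).mul
      (hasDerivAt_variation ht).differentiableAt).differentiableWithinAt
  · have hrad : DifferentiableAt ℂ (radical (Finset.univ.erase i) x.1) t :=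
      differentiableAt_radical fun j hj => mem_slitPlane_of_mem_strip ht (Finset.ne_of_mem_erase hj)
    have hvar : DifferentiableAt ℂ (fun t => fderiv ℂ (fun y => regularPart i y t) x v) t :=
      (hasDerivAt_fderiv_apply (contDiffAt_regularPart 2 he ht) v).differentiableAt
    have hreg := differentiableAt_regularPart he ht
    exact DifferentiableAt.differentiableWithinAt (by fun_prop)
  · simp only [← sqrt_mul_variation he ht (hv i)]
    rw [radical, ← Finset.mul_prod_erase Finset.univ _ (Finset.mem_univ i), ← radical]
    ring

lemma exists_polynomial_radical_mul_variation (he : IsGeneric x.1)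
    (hcard : Fintype.card ι = 2 * d) (hv : ∀ i, fderiv ℂ (branchValue i) x v = 0) :
    ∃ p : ℂ[X], p.degree < (d + 1 : ℕ) ∧
      (∀ t ∈ cutPlane x.1, p.eval t = radical Finset.univ x.1 t * variation x v t) ∧
      ∀ i, x.1 i ^ 2 * p.eval (x.1 i)⁻¹ = v.1 i * (ofFn d x.2.1).eval (x.1 i)⁻¹ := by
  obtain ⟨T, hT, hT_cut, hT_strip⟩ := exists_differentiable_radical_mul_variation he hv
  obtain ⟨p, hp, hpT⟩ := exists_polynomial_of_isLittleO_pow hT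
    (isLittleO_radical_mul_variation he.ne_zero hcard hT.continuous hT_cut)
  refine ⟨p, hp, fun t ht => (hpT t).trans (hT_cut ht), fun i => ?_⟩
  have hi := he.ne_zero i
  have hne : radical (Finset.univ.erase i) x.1 (x.1 i)⁻¹ ≠ 0 := radical_ne_zero fun j hj =>
    mem_slitPlane_of_mem_strip (inv_mem_strip he i) (Finset.ne_of_mem_erase hj)
  rw [hpT, hT_strip i (inv_mem_strip he i)]
  simp only [regularPart, segmentMean_self, integrand, mul_inv_cancel₀ hi]
  generalize radical (Finset.univ.erase i) x.1 (x.1 i)⁻¹ = ρ at hne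
  field_simp
  ring

end Variation

section Submersion

variable {ι : Type} [Fintype ι] {d : ℕ}

lemma surjective_of_forall_eq_zero {K V W W' : Type*} [Field K] [AddCommGroup V] [Module K V]
    [AddCommGroup W] [Module K W] [AddCommGroup W'] [Module K W'] [FiniteDimensional K V]
    [FiniteDimensional K W] [FiniteDimensional K W'] {f : V →ₗ[K] W} {g : V →ₗ[K] W'}
    (h : ∀ v, f v = 0 → g v = 0 → v = 0)
    (hrank : Module.finrank K W + Module.finrank K W' ≤ Module.finrank K V) :
    Function.Surjective f := by
  have hinj : Function.Injective (f.prod g) := (injective_iff_map_eq_zero _).2 fun v hv =>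
    h v (congrArg Prod.fst hv) (congrArg Prod.snd hv)
  have hfinrank : Module.finrank K V = Module.finrank K (W × W') :=
    (LinearMap.finrank_le_finrank_of_injective hinj).antisymm
      (hrank.trans' Module.finrank_prod.le)
  exact Prod.fst_surjective.comp
    ((LinearMap.injective_iff_surjective_of_finrank_eq_finrank hfinrank).1 hinj)

lemma card_filter_eval_ofFn_lt {e : ι → ℂ} (he : Function.Injective e) {q : Fin d → ℂ}
    (hq : q ≠ 0) :
    (Finset.univ.filter fun i => (ofFn d q).eval (e i)⁻¹ = 0).card < d := by
  have hQ : ofFn d q ≠ 0 := fun h => hq (injective_ofFn d (by rw [h, map_zero]))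
  by_contra! hcard
  refine hQ (eq_zero_of_degree_lt_of_eval_index_eq_zero _ (inv_injective.comp he).injOn
    ((ofFn_degree_lt q).trans_le (by exact_mod_cast hcard)) fun i hi => (Finset.mem_filter.1 hi).2)

variable {x v : IntegralData ι d}

lemma eq_zero_of_integrand_eq_zero (h : ∀ t ∈ cutPlane x.1, integrand Finset.univ x t = 0) :
    x.2.1 = 0 := by
  have hroot : ∀ t ∈ cutPlane x.1, (ofFn d x.2.1).IsRoot t := fun t ht =>
    (div_eq_zero_iff.1 (h t ht)).resolve_right (radical_ne_zero fun j _ => ht j)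
  have hQ : ofFn d x.2.1 = 0 := eq_zero_of_infinite_isRoot _ ((infinite_cutPlane x.1).mono hroot)
  exact injective_ofFn d (hQ.trans (map_zero _).symm)

lemma eq_zero_of_variation_eq_zero (hv : v.1 = 0)
    (h : ∀ t ∈ cutPlane x.1, variation x v t = 0) : v = 0 := by
  have hint : ∀ t ∈ cutPlane x.1, integrand Finset.univ (x.1, v.2) t = 0 := by
    intro t ht
    have hzero : HasDerivAt (variation x v) 0 t :=
      (hasDerivAt_const t (0 : ℂ)).congr_of_eventuallyEq
        (eventually_of_mem ((isOpen_cutPlane x.1).mem_nhds ht) h)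
    simpa [integrandVariation, hv] using (hasDerivAt_variation (v := v) ht).unique hzero
  refine Prod.ext hv (Prod.ext (eq_zero_of_integrand_eq_zero (x := (x.1, v.2)) hint) ?_)
  rw [← variation_zero x v, h 0 (zero_mem_cutPlane x.1)]
  rfl

variable [DecidableEq ι]

lemma eq_zero_of_fderiv_branchValue_eq_zero (he : IsGeneric x.1)
    (hcard : Fintype.card ι = 2 * d) (hv : ∀ i, fderiv ℂ (branchValue i) x v = 0)
    (hroot : ∀ i, (ofFn d x.2.1).eval (x.1 i)⁻¹ = 0 → v.1 i = 0) {s : Finset ℂ}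
    (hs : ↑s ⊆ cutPlane x.1) (hvs : ∀ t ∈ s, variation x v t = 0)
    (hs_card : d + 1 ≤
      (Finset.univ.filter fun i => (ofFn d x.2.1).eval (x.1 i)⁻¹ = 0).card + s.card) : v = 0 := by
  set I := Finset.univ.filter fun i => (ofFn d x.2.1).eval (x.1 i)⁻¹ = 0
  obtain ⟨p, hp_deg, hp_cut, hp_inv⟩ := exists_polynomial_radical_mul_variation he hcard hv
  have hinv : Function.Injective fun i => (x.1 i)⁻¹ := inv_injective.comp he.injective
  have hdisj : Disjoint (I.image fun i => (x.1 i)⁻¹) s := Finset.disjoint_left.2 fun t ht hts => by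
    obtain ⟨i, -, rfl⟩ := Finset.mem_image.1 ht
    exact inv_notMem_cutPlane (he.ne_zero i) (hs hts)
  have hp : p = 0 := by
    refine eq_zero_of_degree_lt_of_eval_finset_eq_zero ((I.image fun i => (x.1 i)⁻¹) ∪ s)
      (hp_deg.trans_le ?_) fun t ht => ?_
    · rw [Finset.card_union_of_disjoint hdisj, Finset.card_image_of_injective _ hinv]
      exact_mod_cast hs_card
    · rcases Finset.mem_union.1 ht with ht | ht
      · obtain ⟨i, hi, rfl⟩ := Finset.mem_image.1 ht
        have hi_sq := hp_inv i
        rw [(Finset.mem_filter.1 hi).2, mul_zero] at hi_sq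
        exact (mul_eq_zero.1 hi_sq).resolve_left (pow_ne_zero 2 (he.ne_zero i))
      · rw [hp_cut t (hs ht), hvs t ht, mul_zero]
  simp only [hp, eval_zero, mul_zero] at hp_cut hp_inv
  refine eq_zero_of_variation_eq_zero (x := x) (funext fun i => ?_) fun t ht =>
    (mul_eq_zero.1 (hp_cut t ht).symm).resolve_left (radical_ne_zero fun j _ => ht j)
  exact (mul_eq_zero.1 (hp_inv i).symm).elim id (hroot i)

/-- The values of the abelian integral at the branch points. -/
noncomputable def branchValues (x : IntegralData ι d) (i : ι) : ℂ :=
  branchValue i x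

lemma surjective_fderiv_branchValues (he : IsGeneric x.1) (hcard : Fintype.card ι = 2 * d)
    (hq : x.2.1 ≠ 0) : Function.Surjective (fderiv ℂ branchValues x) := by
  set I := Finset.univ.filter fun i => (ofFn d x.2.1).eval (x.1 i)⁻¹ = 0 with hI
  have hI_card : I.card < d := card_filter_eval_ofFn_lt he.injective hq
  obtain ⟨s, hs, hs_card⟩ := (infinite_cutPlane x.1).exists_subset_card_eq (d + 1 - I.card)
  let g : IntegralData ι d →ₗ[ℂ] (I → ℂ) × (s → ℂ) :=
    (LinearMap.funLeft ℂ ℂ Subtype.val ∘ₗ LinearMap.fst ℂ _ _).prod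
      (LinearMap.pi fun t => (fderiv ℂ (fun y => abelianIntegral y t) x).toLinearMap)
  refine surjective_of_forall_eq_zero (f := (fderiv ℂ branchValues x).toLinearMap) (g := g)
    (fun v hfv hgv => ?_) ?_
  · have hpi := hasFDerivAt_pi.2 fun i =>
      (differentiableAt_branchValue (d := d) (i := i) he).hasFDerivAt
    refine eq_zero_of_fderiv_branchValue_eq_zero he hcard (fun i => ?_) (fun i hi => ?_) hs
      (fun t ht => congrFun (congrArg Prod.snd hgv) ⟨t, ht⟩) (by rw [← hI]; omega)
    · exact (congrFun congr($(hpi.fderiv) v) i).symm.trans (congrFun hfv i)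
    · exact congrFun (congrArg Prod.fst hgv) ⟨i, Finset.mem_filter.2 ⟨Finset.mem_univ i, hi⟩⟩
  · simp only [Module.finrank_prod, Module.finrank_fintype_fun_eq_card, Fintype.card_coe,
      Fintype.card_fin, Module.finrank_self]
    omega

lemma map_branchValues_nhds (he : IsGeneric x.1) (hcard : Fintype.card ι = 2 * d)
    (hq : x.2.1 ≠ 0) : map branchValues (𝓝 x) = 𝓝 (branchValues x) := by
  have hdiff : ContDiffAt ℂ 1 branchValues x := contDiffAt_pi.2 fun i =>
    contDiffAt_branchValue 1 he
  exact (hdiff.hasStrictFDerivAt one_ne_zero).map_nhds_eq_of_surj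
    (LinearMap.range_eq_top.2 (surjective_fderiv_branchValues he hcard hq))

end Submersion

section PellSolution

lemma Pellian.comp_of_C_sq_mul {D E : ℂ[X]} (hD : Pellian D) {b κ : ℂ} (hκ : κ ≠ 0)
    (hE : D.comp (X + C b) = C κ ^ 2 * E) : Pellian E := by
  obtain ⟨A, B, hB, hAB⟩ := hD
  refine ⟨A.comp (X + C b), C κ * B.comp (X + C b), ?_, ?_⟩
  · exact mul_ne_zero (C_ne_zero.2 hκ) (comp_X_add_C_eq_zero_iff.not.2 hB)
  · have hcomp := congrArg (fun p : ℂ[X] => p.comp (X + C b)) hAB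
    simp only [sub_comp, pow_comp, mul_comp, one_comp, hE] at hcomp
    linear_combination hcomp

lemma pellian_prod_X_sub_C_of_pellian_prod_one_sub {ι : Type*} [Fintype ι] {e : ι → ℂ}
    (he : ∀ i, e i ≠ 0) (h : Pellian (∏ j, (1 - C (e j) * X))) (b : ℂ) :
    Pellian (∏ j, (X - C (b + (e j)⁻¹))) := by
  have hprod : ∏ j, -e j ≠ 0 := Finset.prod_ne_zero_iff.2 fun j _ => neg_ne_zero.2 (he j)
  have hκ : Complex.sqrt (∏ j, -e j) ≠ 0 := fun h =>
    hprod (by rw [← complexSqrt_sq (∏ j, -e j), h, zero_pow two_ne_zero])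
  refine h.comp_of_C_sq_mul (b := -b) hκ ?_
  rw [← C_pow, complexSqrt_sq, map_prod, ← Finset.prod_mul_distrib, prod_comp]
  refine Finset.prod_congr rfl fun j _ => ?_
  have hinv : C (e j) * C (e j)⁻¹ = (1 : ℂ[X]) := by
    rw [← C_mul, mul_inv_cancel₀ (he j), C_1]
  simp only [sub_comp, one_comp, mul_comp, C_comp, X_comp, C_add, C_neg]
  linear_combination (-1 : ℂ[X]) * hinv

lemma norm_cosh_le_exp_norm (z : ℂ) : ‖Complex.cosh z‖ ≤ Real.exp ‖z‖ := by
  have hpos := Complex.norm_exp_le_exp_norm z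
  have hneg := Complex.norm_exp_le_exp_norm (-z)
  rw [norm_neg] at hneg
  rw [Complex.cosh, norm_div, Complex.norm_ofNat, div_le_iff₀ two_pos]
  linarith [norm_add_le (Complex.exp z) (Complex.exp (-z))]

lemma norm_sinh_le_exp_norm (z : ℂ) : ‖Complex.sinh z‖ ≤ Real.exp ‖z‖ := by
  have hpos := Complex.norm_exp_le_exp_norm z
  have hneg := Complex.norm_exp_le_exp_norm (-z)
  rw [norm_neg] at hneg
  rw [Complex.sinh, norm_div, Complex.norm_ofNat, div_le_iff₀ two_pos]
  linarith [norm_sub_le (Complex.exp z) (Complex.exp (-z))]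

lemma norm_sinh_le_norm_cosh_add_one (z : ℂ) : ‖Complex.sinh z‖ ≤ ‖Complex.cosh z‖ + 1 := by
  have hsq : ‖Complex.sinh z‖ ^ 2 ≤ ‖Complex.cosh z‖ ^ 2 + 1 := by
    rw [← norm_pow, Complex.sinh_sq, ← norm_pow]
    exact (norm_sub_le _ _).trans_eq (by rw [norm_one])
  refine abs_le_of_sq_le_sq' ?_ (by positivity) |>.2
  linarith [norm_nonneg (Complex.cosh z)]

lemma exists_exp_norm_isBigO_pow {b : ℂ → ℂ} {l : Filter ℂ} (hl : l ≤ Bornology.cobounded ℂ)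
    (hb : b =O[l] fun z => Real.log ‖z‖) :
    ∃ k : ℕ, (fun z => Real.exp ‖b z‖) =O[l] fun z => z ^ k := by
  obtain ⟨C, hC⟩ := hb.bound
  refine ⟨⌈C⌉₊, IsBigO.of_bound 1 ?_⟩
  filter_upwards [hC, hl (tendsto_norm_cobounded_atTop.eventually_ge_atTop 1)] with z hz hz1
  have hz_pos : 0 < ‖z‖ := one_pos.trans_le hz1
  rw [Real.norm_of_nonneg (Real.log_nonneg hz1)] at hz
  rw [Real.norm_of_nonneg (Real.exp_nonneg _), one_mul, norm_pow]
  calc Real.exp ‖b z‖ ≤ Real.exp (⌈C⌉₊ * Real.log ‖z‖) := Real.exp_le_exp.2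
        (hz.trans (mul_le_mul_of_nonneg_right (Nat.le_ceil C) (Real.log_nonneg hz1)))
    _ = ‖z‖ ^ ⌈C⌉₊ := by rw [mul_comm, Real.exp_mul, Real.exp_log hz_pos, Real.rpow_natCast]

/- No bound on `H` itself is needed: on a circle `cosh ∘ H` and `sinh ∘ H` are bounded, and along
the radii `H` grows only logarithmically, so the addition theorems give polynomial growth. -/
lemma exists_isBigO_pow_cosh_sinh {S : Set ℂ} {H h T : ℂ → ℂ} (hS : StarConvex ℝ 0 S)
    (hH : ∀ z ∈ S, HasDerivAt H (h z) z) (hh : h =O[Bornology.cobounded ℂ ⊓ 𝓟 S] fun z => z⁻¹)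
    (hT : Continuous T) (hTH : EqOn T (fun z => Complex.cosh (H z)) S) :
    ∃ k : ℕ, (fun z => Complex.cosh (H z)) =O[Bornology.cobounded ℂ ⊓ 𝓟 S] (fun z => z ^ k) ∧
      (fun z => Complex.sinh (H z)) =O[Bornology.cobounded ℂ ⊓ 𝓟 S] (fun z => z ^ k) := by
  obtain ⟨R, hlog, hR⟩ :=
    ((eventually_isBigO_log_sub_radial hS hH hh).and (eventually_gt_atTop 0)).exists
  obtain ⟨M, hM⟩ := (isCompact_sphere (0 : ℂ) R).exists_bound_of_continuousOn hT.continuousOn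
  have hcosh_R := isBigO_one_comp_radial ℂ hS hR (u := fun z => Complex.cosh (H z)) fun z hz =>
    (congrArg norm (hTH hz.2)).symm.trans_le (hM z hz.1)
  have hsinh_R := isBigO_one_comp_radial ℂ hS hR (u := fun z => Complex.sinh (H z)) (M := M + 1)
    fun z hz => (norm_sinh_le_norm_cosh_add_one _).trans
      (by simpa only [← hTH hz.2] using add_le_add_left (hM z hz.1) 1)
  obtain ⟨k, hk⟩ := exists_exp_norm_isBigO_pow inf_le_left hlog
  have hcosh_b := (IsBigO.of_norm_le fun z => norm_cosh_le_exp_norm _).trans hk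
  have hsinh_b := (IsBigO.of_norm_le fun z => norm_sinh_le_exp_norm _).trans hk
  refine ⟨k, ?_, ?_⟩
  · simpa [← Complex.cosh_add] using (hcosh_R.mul hcosh_b).add (hsinh_R.mul hsinh_b)
  · simpa [← Complex.sinh_add] using (hsinh_R.mul hcosh_b).add (hcosh_R.mul hsinh_b)

lemma exists_polynomial_of_isBigO_pow {T : ℂ → ℂ} {S : Set ℂ} {k : ℕ} (hT : Differentiable ℂ T)
    (hS : Dense S) (h : T =O[Bornology.cobounded ℂ ⊓ 𝓟 S] fun z => z ^ k) :
    ∃ p : ℂ[X], ∀ z, p.eval z = T z := by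
  obtain ⟨C, hC⟩ := h.isBigOWith
  have hglobal : T =O[Bornology.cobounded ℂ] fun z => z ^ k :=
    (isBigOWith_cobounded_of_dense hT.continuous (by fun_prop) hS hC).isBigO
  have hpow : (fun z : ℂ => z ^ k) =o[Bornology.cobounded ℂ] fun z => z ^ (k + 1) :=
    isLittleO_pow_pow_cobounded_of_lt k.lt_succ_self
  obtain ⟨p, -, hp⟩ := exists_polynomial_of_isLittleO_pow hT (hglobal.trans_isLittleO hpow)
  exact ⟨p, hp⟩

variable {ι : Type} [Fintype ι] {d : ℕ} {x : IntegralData ι d}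

lemma isBigO_one_inv_radical {e : ι → ℂ} (he : ∀ i, e i ≠ 0) (hcard : Fintype.card ι = 2 * d) :
    (fun z => (radical Finset.univ e z)⁻¹) =O[Bornology.cobounded ℂ] fun _ => (1 : ℂ) := by
  have hpow : (fun z : ℂ => (z ^ d)⁻¹) =O[Bornology.cobounded ℂ] fun _ => (1 : ℂ) := by
    refine IsBigO.of_bound 1 ?_
    filter_upwards [tendsto_norm_cobounded_atTop.eventually_ge_atTop 1] with z hz
    simpa using inv_le_one_of_one_le₀ (one_le_pow₀ hz)
  exact (isTheta_radical he hcard).inv.1.trans hpow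

lemma exists_sinh_abelianIntegral_ne_zero (hq : x.2.1 ≠ 0) :
    ∃ t ∈ cutPlane x.1, Complex.sinh (abelianIntegral x t) ≠ 0 := by
  contrapose! hq with hsinh
  refine eq_zero_of_integrand_eq_zero fun t ht => ?_
  have hzero : HasDerivAt (fun t => Complex.sinh (abelianIntegral x t)) 0 t :=
    (hasDerivAt_const t (0 : ℂ)).congr_of_eventuallyEq
      (eventually_of_mem ((isOpen_cutPlane x.1).mem_nhds ht) hsinh)
  have hcosh : Complex.cosh (abelianIntegral x t) ≠ 0 := fun h => by
    simpa [h, hsinh t ht] using Complex.cosh_sq_sub_sinh_sq (abelianIntegral x t)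
  exact (mul_eq_zero.1 ((hasDerivAt_abelianIntegral ht).csinh.unique hzero)).resolve_left hcosh

variable [DecidableEq ι] {i : ι} {t : ℂ}

lemma cosh_abelianIntegral_eq (he : IsGeneric x.1) (ht : t ∈ strip x.1 i ∩ cutPlane x.1)
    (hP : Complex.sinh (branchValue i x) = 0) :
    Complex.cosh (abelianIntegral x t) = Complex.cosh (branchValue i x) *
      Complex.cosh (Complex.sqrt (1 - x.1 i * t) * regularPart i x t) := by
  rw [abelianIntegral_eq he ht, Complex.cosh_add, hP, zero_mul, add_zero]

lemma sinh_abelianIntegral_eq (he : IsGeneric x.1) (ht : t ∈ strip x.1 i ∩ cutPlane x.1)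
    (hP : Complex.sinh (branchValue i x) = 0) :
    Complex.sinh (abelianIntegral x t) = Complex.cosh (branchValue i x) *
      Complex.sinh (Complex.sqrt (1 - x.1 i * t) * regularPart i x t) := by
  rw [abelianIntegral_eq he ht, Complex.sinh_add, hP, zero_mul, zero_add]

lemma exists_differentiable_eqOn_cosh (he : IsGeneric x.1)
    (hP : ∀ i, Complex.sinh (branchValue i x) = 0) : ∃ T : ℂ → ℂ, Differentiable ℂ T ∧
      EqOn T (fun t => Complex.cosh (abelianIntegral x t)) (cutPlane x.1) := by
  obtain ⟨C, -, hC, -, hC_sq, -⟩ := exists_cosh_sinh_comp_sq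
  obtain ⟨T, hT, hTf, -⟩ := exists_differentiable_of_eqOn_strip he
    (f := fun t => Complex.cosh (abelianIntegral x t))
    (g := fun i t => Complex.cosh (branchValue i x) *
      C ((1 - x.1 i * t) * regularPart i x t ^ 2))
    (fun t ht => (hasDerivAt_abelianIntegral ht).differentiableAt.ccosh.differentiableWithinAt)
    (fun i t ht => by
      have hreg := differentiableAt_regularPart he ht
      exact DifferentiableAt.differentiableWithinAt (by fun_prop))
    (fun i t ht => by
      simp only [cosh_abelianIntegral_eq he ht (hP i), ← hC_sq, mul_pow, complexSqrt_sq])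
  exact ⟨T, hT, hTf⟩

lemma exists_differentiable_eqOn_sinh_div_radical (he : IsGeneric x.1)
    (hP : ∀ i, Complex.sinh (branchValue i x) = 0) : ∃ T : ℂ → ℂ, Differentiable ℂ T ∧
      EqOn T (fun t => Complex.sinh (abelianIntegral x t) / radical Finset.univ x.1 t)
        (cutPlane x.1) := by
  obtain ⟨-, S, -, hS, -, hS_sq⟩ := exists_cosh_sinh_comp_sq
  obtain ⟨T, hT, hTf, -⟩ := exists_differentiable_of_eqOn_strip he
    (f := fun t => Complex.sinh (abelianIntegral x t) / radical Finset.univ x.1 t)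
    (g := fun i t => Complex.cosh (branchValue i x) * (regularPart i x t *
      S ((1 - x.1 i * t) * regularPart i x t ^ 2)) / radical (Finset.univ.erase i) x.1 t)
    (fun t ht => ((hasDerivAt_abelianIntegral ht).differentiableAt.csinh.div
      (differentiableAt_radical fun j _ => ht j)
      (radical_ne_zero fun j _ => ht j)).differentiableWithinAt)
    (fun i t ht => by
      have hslit : ∀ j ∈ Finset.univ.erase i, 1 - x.1 j * t ∈ Complex.slitPlane := fun j hj =>
        mem_slitPlane_of_mem_strip ht (Finset.ne_of_mem_erase hj)
      have hreg := differentiableAt_regularPart he ht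
      exact (DifferentiableAt.div (by fun_prop) (differentiableAt_radical hslit)
        (radical_ne_zero hslit)).differentiableWithinAt)
    (fun i t ht => by
      have hne := complexSqrt_ne_zero (ht.2 i)
      simp only [sinh_abelianIntegral_eq he ht (hP i), ← hS_sq, mul_pow, complexSqrt_sq]
      rw [radical, ← Finset.mul_prod_erase Finset.univ _ (Finset.mem_univ i), ← radical]
      field_simp)
  exact ⟨T, hT, hTf⟩

lemma pellian_prod_one_sub_of_sinh_branchValue_eq_zero (he : IsGeneric x.1)
    (hcard : Fintype.card ι = 2 * d) (hq : x.2.1 ≠ 0)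
    (hP : ∀ i, Complex.sinh (branchValue i x) = 0) :
    Pellian (∏ j, (1 - C (x.1 j) * X)) := by
  obtain ⟨T₁, hT₁, hcosh⟩ := exists_differentiable_eqOn_cosh he hP
  obtain ⟨T₂, hT₂, hsinh⟩ := exists_differentiable_eqOn_sinh_div_radical he hP
  obtain ⟨k, hk_cosh, hk_sinh⟩ := exists_isBigO_pow_cosh_sinh (starConvex_cutPlane x.1)
    (fun z hz => hasDerivAt_abelianIntegral hz)
    ((isBigO_integrand he.ne_zero hcard).mono inf_le_left) hT₁.continuous hcosh
  have hmem : ∀ᶠ z in Bornology.cobounded ℂ ⊓ 𝓟 (cutPlane x.1), z ∈ cutPlane x.1 :=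
    mem_inf_of_right (mem_principal_self _)
  have hk_quot := hk_sinh.mul ((isBigO_one_inv_radical he.ne_zero hcard).mono inf_le_left)
  simp only [mul_one] at hk_quot
  obtain ⟨A, hA⟩ := exists_polynomial_of_isBigO_pow hT₁ (dense_cutPlane he.ne_zero)
    (hk_cosh.congr' (hmem.mono fun z hz => (hcosh hz).symm) .rfl)
  obtain ⟨B, hB⟩ := exists_polynomial_of_isBigO_pow hT₂ (dense_cutPlane he.ne_zero)
    (hk_quot.congr' (hmem.mono fun z hz => (hsinh hz).symm) .rfl)
  refine ⟨A, B, ?_, ?_⟩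
  · rintro rfl
    obtain ⟨t, ht, hne⟩ := exists_sinh_abelianIntegral_ne_zero hq
    exact div_ne_zero hne (radical_ne_zero fun j _ => ht j)
      ((hsinh ht).symm.trans ((hB t).symm.trans eval_zero))
  · refine eq_of_infinite_eval_eq _ _ ((infinite_cutPlane x.1).mono fun t ht => ?_)
    have hne : radical Finset.univ x.1 t ≠ 0 := radical_ne_zero fun j _ => ht j
    simp only [mem_ofPred_eq, eval_sub, eval_pow, eval_mul, eval_prod, eval_one, eval_C, eval_X]
    rw [← radical_sq, hA, hB, hcosh ht, hsinh ht, ← mul_pow, mul_div_cancel₀ _ hne]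
    exact Complex.cosh_sq_sub_sinh_sq _

end PellSolution

section Density

lemma tendsto_floor_mul_natCast_div (r : ℝ) :
    Tendsto (fun N : ℕ => (⌊r * N⌋ : ℝ) / N) atTop (𝓝 r) := by
  rw [tendsto_iff_norm_sub_tendsto_zero]
  refine squeeze_zero' (.of_forall fun _ => norm_nonneg _) ?_
    (tendsto_one_div_atTop_nhds_zero_nat (𝕜 := ℝ))
  filter_upwards [eventually_gt_atTop 0] with N hN
  have hN' : (0 : ℝ) < N := by exact_mod_cast hN
  have hfract : (⌊r * N⌋ : ℝ) / N - r = -Int.fract (r * N) / N := by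
    rw [Int.fract]
    field_simp
    ring
  rw [hfract, norm_div, norm_neg, Real.norm_of_nonneg (Int.fract_nonneg _),
    Real.norm_of_nonneg hN'.le]
  gcongr
  exact (Int.fract_lt_one _).le

lemma frequently_sinh_natCast_mul_eq_zero {ι : Type*} {y : ι → ℂ} (hy : ∀ i, (y i).re = 0) :
    ∃ᶠ z in 𝓝 y, ∃ N : ℕ, N ≠ 0 ∧ ∀ i, Complex.sinh (N * z i) = 0 := by
  have hlim : Tendsto (fun (N : ℕ) (i : ι) =>
      ((((⌊(y i).im / Real.pi * N⌋ : ℝ) / N : ℝ) : ℂ) * Real.pi * Complex.I)) atTop (𝓝 y) := by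
    refine tendsto_pi_nhds.2 fun i => ?_
    have hcont : Continuous fun s : ℝ => (s : ℂ) * Real.pi * Complex.I := by fun_prop
    have hyi : y i = ((y i).im / Real.pi : ℝ) * Real.pi * Complex.I := by
      rw [← Complex.ofReal_mul, div_mul_cancel₀ _ Real.pi_ne_zero]
      apply Complex.ext <;> simp [hy i]
    nth_rw 2 [hyi]
    exact (hcont.tendsto _).comp (tendsto_floor_mul_natCast_div _)
  refine hlim.frequently (Eventually.frequently ?_)
  filter_upwards [eventually_ne_atTop 0] with N hN
  refine ⟨N, hN, fun i => ?_⟩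
  have hN' : (N : ℂ) ≠ 0 := Nat.cast_ne_zero.2 hN
  have hmul (m : ℤ) : (N : ℂ) * (((m : ℝ) / N : ℝ) * Real.pi * Complex.I) =
      m * Real.pi * Complex.I := by
    push_cast
    field_simp
  rw [hmul, Complex.sinh_mul_I, Complex.sin_int_mul_pi, zero_mul]

lemma exists_isGeneric_inv_sub {ι : Type*} [Finite ι] [Nontrivial ι] {a : ι → ℂ}
    (ha : Function.Injective a) :
    ∃ b, IsGeneric fun i => (a i - b)⁻¹ := by
  have him (i j : ι) (b : ℂ) : ((a j - b) * (starRingEnd ℂ) (a i - b)).im =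
      ((starRingEnd ℂ) (a j - a i) * b + a j * (starRingEnd ℂ) (a i)).im := by
    simp only [map_sub, Complex.add_im, Complex.mul_im, Complex.sub_re, Complex.sub_im,
      Complex.conj_re, Complex.conj_im]
    ring
  obtain ⟨b, hb⟩ := (dense_setOf_forall_im_ne_zero (κ := {p : ι × ι // p.1 ≠ p.2})
    (α := fun p => (starRingEnd ℂ) (a p.1.2 - a p.1.1))
    (β := fun p => a p.1.2 * (starRingEnd ℂ) (a p.1.1)) fun p => by
      exact star_ne_zero.2 (sub_ne_zero.2 (ha.ne p.2.symm))).nonempty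
  have hne {i j : ι} (hij : i ≠ j) : ((a j - b) * (starRingEnd ℂ) (a i - b)).im ≠ 0 := by
    rw [him]
    exact hb ⟨(i, j), hij⟩
  have hab (i : ι) : a i ≠ b := fun h => by
    obtain ⟨j, hj⟩ := exists_ne i
    exact hne hj.symm (by simp [h])
  refine ⟨b, fun i => inv_ne_zero (sub_ne_zero.2 (hab i)), fun i j hij hzero => hne hij ?_⟩
  have hdiv : (a j - b) * (starRingEnd ℂ) (a i - b) =
      (a i - b)⁻¹ / (a j - b)⁻¹ * (Complex.normSq (a i - b) : ℂ) := by
    have := sub_ne_zero.2 (hab i)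
    rw [← Complex.mul_conj, div_inv_eq_mul]
    field_simp
  rw [hdiv, Complex.im_mul_ofReal, hzero, zero_mul]

variable {ι : Type} [Fintype ι] {d : ℕ}

lemma exists_ne_zero_forall_re_eq_zero {V : Type*} [AddCommGroup V] [Module ℂ V]
    [FiniteDimensional ℂ V] [Nonempty ι] (T : V × ℂ →ₗ[ℂ] ι → ℂ)
    (hT : ∀ c i, T (0, c) i = c) (hcard : Fintype.card ι ≤ 2 * Module.finrank ℂ V) :
    ∃ y : V × ℂ, y.1 ≠ 0 ∧ ∀ i, (T y i).re = 0 := by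
  let S : V × ℂ →ₗ[ℝ] (ι → ℝ) × ℝ := (Complex.reLm.compLeft ι ∘ₗ T.restrictScalars ℝ).prod
    (Complex.imLm ∘ₗ LinearMap.snd ℝ V ℂ)
  have hker : LinearMap.ker S ≠ ⊥ := LinearMap.ker_ne_bot_of_finrank_lt <| by
    have := finrank_real_of_complex V
    have : FiniteDimensional ℝ V := FiniteDimensional.complexToReal V
    simp only [Module.finrank_prod, Module.finrank_fintype_fun_eq_card, Module.finrank_self,
      Complex.finrank_real_complex]
    omega
  obtain ⟨y, hy, hy_ne⟩ := Submodule.exists_mem_ne_zero_of_ne_bot hker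
  obtain ⟨hre, him⟩ := Prod.ext_iff.1 (LinearMap.mem_ker.1 hy)
  refine ⟨y, fun hy₁ => hy_ne ?_, fun i => congrFun hre i⟩
  have hre₂ : (T (0, y.2) (Classical.arbitrary ι)).re = 0 := by
    rw [← hy₁]
    exact congrFun hre _
  exact Prod.ext hy₁ (Complex.ext (by rwa [hT] at hre₂) him)

variable {e : ι → ℂ}

lemma isLinearMap_branchValues [DecidableEq ι] (he : IsGeneric e) :
    IsLinearMap ℂ fun y : (Fin d → ℂ) × ℂ => branchValues (e, y) := by
  have hlin (c : ℂ) (y z : (Fin d → ℂ) × ℂ) :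
      branchValues (e, c • y + z) = c • branchValues (e, y) + branchValues (e, z) := by
    funext i
    have hcont (y : (Fin d → ℂ) × ℂ) : ∀ z ∈ segment ℝ (e i)⁻¹ 0,
        ContinuousAt (integrand (Finset.univ.erase i) (e, y)) z := fun z hz =>
      (analyticAt_integrand_right (x := (e, y))
        (mem_slitPlane_of_mem_segment_inv he (zero_mem_strip he i) z hz)).continuousAt
    have hint : integrand (Finset.univ.erase i) (e, c • y + z) = fun t =>
        c * integrand (Finset.univ.erase i) (e, y) t +
          integrand (Finset.univ.erase i) (e, z) t := by
      funext t
      simp only [integrand, Prod.fst_add, Prod.smul_fst, map_add, map_smul, eval_add, eval_smul,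
        smul_eq_mul]
      ring
    simp only [branchValues, branchValue, regularPart, Pi.add_apply, Pi.smul_apply, smul_eq_mul,
      hint, segmentMean_const_mul_add c (hcont y) (hcont z), Prod.snd_add, Prod.smul_snd]
    ring
  have hzero : branchValues (e, (0 : (Fin d → ℂ) × ℂ)) = 0 := by
    simpa using hlin 1 0 0
  exact ⟨fun y z => by simpa using hlin 1 y z, fun c y => by simpa [hzero] using hlin c y 0⟩

lemma exists_re_branchValues_eq_zero [DecidableEq ι] [Nonempty ι] (he : IsGeneric e)
    (hcard : Fintype.card ι = 2 * d) :
    ∃ y : (Fin d → ℂ) × ℂ, y.1 ≠ 0 ∧ ∀ i, (branchValues (e, y) i).re = 0 :=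
  exists_ne_zero_forall_re_eq_zero ((isLinearMap_branchValues he).mk' _)
    (fun c i => by simp [branchValues, branchValue, regularPart, integrand, segmentMean])
    (by simp [hcard])

lemma frequently_pellian_prod_one_sub [Nonempty ι] (he : IsGeneric e)
    (hcard : Fintype.card ι = 2 * d) :
    ∃ᶠ e' in 𝓝 e, IsGeneric e' ∧ Pellian (∏ j, (1 - C (e' j) * X)) := by
  classical
  obtain ⟨y, hy, hre⟩ := exists_re_branchValues_eq_zero he hcard
  have hfreq := frequently_sinh_natCast_mul_eq_zero hre
  rw [← map_branchValues_nhds he hcard hy, frequently_map] at hfreq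
  have hfst : Tendsto Prod.fst (𝓝 (e, y)) (𝓝 e) := continuous_fst.tendsto _
  have hq : ∀ᶠ x in 𝓝 (e, y), x.2.1 ≠ 0 := ContinuousAt.eventually_ne (by fun_prop) hy
  refine hfst.frequently ((hfreq.and_eventually
    ((hfst.eventually (eventually_isGeneric he)).and hq)).mono ?_)
  rintro ⟨e', z⟩ ⟨⟨N, hN, hsinh⟩, he', hz⟩
  refine ⟨he', pellian_prod_one_sub_of_sinh_branchValue_eq_zero (x := (e', (N : ℂ) • z)) he' hcard
    (smul_ne_zero (Nat.cast_ne_zero.2 hN) hz) fun i => ?_⟩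
  rw [← hsinh i]
  exact congr(Complex.sinh ($((isLinearMap_branchValues he').map_smul (N : ℂ) z) i))

lemma frequently_pellian_prod_X_sub_C (hd : 0 < d) (hcard : Fintype.card ι = 2 * d) {a : ι → ℂ}
    (ha : Function.Injective a) :
    ∃ᶠ a' in 𝓝 a, Function.Injective a' ∧ Pellian (∏ j, (X - C (a' j))) := by
  have : Nontrivial ι := Fintype.one_lt_card_iff_nontrivial.1 (by omega)
  obtain ⟨b, hgen⟩ := exists_isGeneric_inv_sub ha
  have hlim : Tendsto (fun (e : ι → ℂ) j => b + (e j)⁻¹) (𝓝 fun j => (a j - b)⁻¹) (𝓝 a) := by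
    refine tendsto_pi_nhds.2 fun j => ?_
    have hcont : ContinuousAt (fun e : ι → ℂ => b + (e j)⁻¹) fun j => (a j - b)⁻¹ :=
      continuousAt_const.add ((continuous_apply j).continuousAt.inv₀ (hgen.ne_zero j))
    simpa [ContinuousAt] using hcont
  refine hlim.frequently ((frequently_pellian_prod_one_sub hgen hcard).mono ?_)
  rintro e ⟨he, hpell⟩
  exact ⟨fun i j hij => he.injective (inv_injective (add_left_cancel hij)),
    pellian_prod_X_sub_C_of_pellian_prod_one_sub he.ne_zero hpell b⟩

end Density

section Coefficients

lemma continuous_coeff_prod_X_sub_C {ι R : Type*} [CommRing R] [TopologicalSpace R]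
    [IsTopologicalRing R] (s : Finset ι) (n : ℕ) :
    Continuous fun a : ι → R => (∏ j ∈ s, (X - C (a j))).coeff n := by
  classical
  induction s using Finset.induction_on generalizing n with
  | empty => simpa using continuous_const
  | insert j s hj ih =>
    simp only [Finset.prod_insert hj, sub_mul, coeff_sub, coeff_C_mul]
    refine Continuous.sub ?_ ((continuous_apply j).mul (ih n))
    cases n with
    | zero => simpa using continuous_const
    | succ n => simpa only [coeff_X_mul] using ih n

lemma exists_injective_prod_X_sub_C_eq {K : Type*} [Field K] [IsAlgClosed K] {P : K[X]}
    (hP : P.Monic) (hsep : P.Separable) :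
    ∃ a : Fin P.natDegree → K, Function.Injective a ∧ ∏ j, (X - C (a j)) = P := by
  classical
  have hsplits := IsAlgClosed.splits P
  have hnodup := nodup_roots hsep
  have hcard : P.roots.toFinset.card = P.natDegree := by
    rw [Multiset.toFinset_card_of_nodup hnodup, hsplits.natDegree_eq_card_roots]
  let enum := (P.roots.toFinset.equivFinOfCardEq hcard).symm
  refine ⟨fun j => enum j, Subtype.val_injective.comp enum.injective, ?_⟩
  rw [enum.prod_comp fun z => X - C (z : K),
    Finset.prod_coe_sort P.roots.toFinset fun z => X - C z, Finset.prod, Multiset.toFinset_val,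
    hnodup.dedup]
  exact (hsplits.eq_prod_roots_of_monic hP).symm

variable {d : ℕ}

lemma Dpoly_eq_X_pow_add_ofFn (s : Fin (2 * d) → ℂ) :
    Dpoly d s = X ^ (2 * d) + ofFn (2 * d) (s ∘ Fin.rev) := by
  rw [Dpoly, ofFn_eq_sum_monomial, ← Equiv.sum_comp Fin.revPerm]
  refine congr_arg _ (Finset.sum_congr rfl fun i _ => ?_)
  have hi : 2 * d - 1 - (i.rev : ℕ) = i := by
    rw [Fin.val_rev]
    omega
  rw [Fin.revPerm_apply, hi, C_mul_X_pow_eq_monomial, Function.comp_apply]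

lemma monic_Dpoly (s : Fin (2 * d) → ℂ) : (Dpoly d s).Monic := by
  rw [Dpoly_eq_X_pow_add_ofFn]
  exact monic_X_pow_add (ofFn_degree_lt _)

lemma natDegree_Dpoly (s : Fin (2 * d) → ℂ) : (Dpoly d s).natDegree = 2 * d := by
  rw [Dpoly_eq_X_pow_add_ofFn]
  have hlt : (ofFn (2 * d) (s ∘ Fin.rev)).degree < (X ^ (2 * d) : ℂ[X]).degree :=
    (ofFn_degree_lt _).trans_eq (degree_X_pow _).symm
  exact natDegree_eq_of_degree_eq_some
    ((degree_add_eq_left_of_degree_lt hlt).trans (degree_X_pow _))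

lemma coeff_rev_Dpoly (s : Fin (2 * d) → ℂ) (i : Fin (2 * d)) :
    (Dpoly d s).coeff i.rev = s i := by
  rw [Dpoly_eq_X_pow_add_ofFn, coeff_add, coeff_X_pow, if_neg i.rev.is_lt.ne, zero_add,
    ofFn_coeff_eq_val_of_lt _ i.rev.is_lt, Fin.eta, Function.comp_apply, Fin.rev_rev]

lemma Dpoly_coeff_rev {P : ℂ[X]} (hP : P.Monic) (hdeg : P.natDegree = 2 * d) :
    Dpoly d (fun i => P.coeff i.rev) = P := by
  conv_rhs => rw [hP.as_sum, hdeg, Finset.sum_range]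
  simp only [Dpoly_eq_X_pow_add_ofFn, ofFn_eq_sum_monomial, Function.comp_apply, Fin.rev_rev,
    C_mul_X_pow_eq_monomial]

end Coefficients

theorem stmt0 (d : ℕ) (hd : 2 ≤ d) (s : Fin (2*d) → ℂ) (hs : Squarefree (Dpoly d s)) :
    s ∈ closure {s' : Fin (2*d) → ℂ | Squarefree (Dpoly d s') ∧ Pellian (Dpoly d s')} := by
  obtain ⟨a, ha, hprod⟩ := exists_injective_prod_X_sub_C_eq (monic_Dpoly s)
    (PerfectField.separable_iff_squarefree.2 hs)
  let coeffs (a : Fin (Dpoly d s).natDegree → ℂ) (i : Fin (2 * d)) : ℂ :=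
    (∏ j, (X - C (a j))).coeff i.rev
  have hcoeffs : Continuous coeffs :=
    continuous_pi fun i => continuous_coeff_prod_X_sub_C Finset.univ i.rev
  have hs_eq : coeffs a = s := funext fun i => by simp only [coeffs, hprod, coeff_rev_Dpoly]
  have hD (a') : Dpoly d (coeffs a') = ∏ j, (X - C (a' j)) :=
    Dpoly_coeff_rev (monic_prod_X_sub_C _ _) (by simp [natDegree_Dpoly])
  have hfreq := frequently_pellian_prod_X_sub_C (zero_lt_two.trans_le hd)
    (by simp [natDegree_Dpoly]) ha
  rw [mem_closure_iff_frequently, ← hs_eq]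
  refine (hcoeffs.tendsto a).frequently (hfreq.mono fun a' ⟨ha', hpell⟩ => ?_)
  rw [mem_ofPred_eq, hD]
  exact ⟨(separable_prod_X_sub_C_iff.2 ha').squarefree, hpell⟩
end

section
/- For all integers n ≥ d ≥ 2 there exist a squarefree polynomial D ∈ ℂ[t] of degree 2d and a solution (A,B) of the Pell–Abel equation for D with deg A = n such that every solution (A′,B′) of the Pell–Abel equation for D satisfies deg A′ ≥ n (i.e., (A,B) is a primitive solution of degree n). -/
/-!
Start from `T_n ^ 2 - 1 = (X ^ 2 - 1) U_{n-1} ^ 2` for the Chebyshev polynomial `T_n`, whose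
critical values are all `± 1`. The critical points are nondegenerate, so by the inverse function
theorem the critical values can be prescribed freely near those of `T_n`. Push the `d - 1` rightmost
ones slightly outside `[-1, 1]` and keep the others: for the resulting `A`, the `n - d` critical
points with value `± 1` are the double roots of `A ^ 2 - 1`, all its other `2 d` roots are simple,
and the two factors are `B ^ 2` and `D`.

If `(A₀, B₀)` is primitive then `A = ± T_k(A₀)` for some `k`. To the right of all critical points
`A` maps an interval `[a, b]` bijectively onto `[-1, 1]`, and `a`, `b` are roots of `D`, so
`A₀(a)` and `A₀(b)` are `± 1`. As `T_k` takes values in `[-1, 1]` only at real points, `A₀` is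
real on `[a, b]` and takes there all values in `[-1, 1]`. Hence `T_k` is injective on `[-1, 1]`,
which forces `k = ± 1`.
-/

open Polynomial Filter Set
open scoped Topology

section PellAbel

variable {R : Type*} [CommRing R] {D A B A₀ B₀ : R[X]}

/-- The Pell–Abel equation for `D`. The trivial solutions, those with `B = 0`, are included, so that
the solutions for a given `D` form a group. -/
def IsPellAbel (D A B : R[X]) : Prop :=
  A ^ 2 - D * B ^ 2 = 1

/-- A nontrivial solution of the Pell–Abel equation of minimal degree, where the degree of a
solution `(A, B)` is that of `A`. -/
structure IsPrimitivePellAbel (D A B : R[X]) : Prop where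
  isPellAbel : IsPellAbel D A B
  ne_zero : B ≠ 0
  natDegree_le : ∀ ⦃A' B' : R[X]⦄, B' ≠ 0 → IsPellAbel D A' B' → A.natDegree ≤ A'.natDegree

/-- `(A, B)` is, up to sign, the `k`-th power of `(A₀, B₀)`, which for a solution `(A₀, B₀)` of the
Pell–Abel equation for `D` means that `A + B √D = ± (A₀ + B₀ √D) ^ k`. -/
def IsPellAbelPow (A₀ B₀ : R[X]) (k : ℤ) (A B : R[X]) : Prop :=
  ∃ s : R[X], s ^ 2 = 1 ∧ A = s * (Chebyshev.T R k).comp A₀ ∧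
    B = s * ((Chebyshev.U R (k - 1)).comp A₀ * B₀)

theorem IsPellAbelPow.neg_right {k : ℤ} (h : IsPellAbelPow A₀ B₀ k A B) :
    IsPellAbelPow A₀ B₀ (-k) A (-B) := by
  obtain ⟨s, hs, rfl, rfl⟩ := h
  refine ⟨s, hs, by rw [Chebyshev.T_neg], ?_⟩
  rw [Chebyshev.U_neg_sub_one, neg_comp]
  ring

namespace IsPellAbel

theorem neg_right (h : IsPellAbel D A B) : IsPellAbel D A (-B) := by
  rwa [IsPellAbel, neg_sq]

theorem mul (h₀ : IsPellAbel D A₀ B₀) (h : IsPellAbel D A B) :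
    IsPellAbel D (A * A₀ + D * (B * B₀)) (A * B₀ + B * A₀) := by
  unfold IsPellAbel at *
  linear_combination (A₀ ^ 2 - D * B₀ ^ 2) * h + h₀

theorem map {S : Type*} [CommRing S] (f : R →+* S) (h : IsPellAbel D A B) :
    IsPellAbel (D.map f) (A.map f) (B.map f) := by
  simpa [IsPellAbel] using congrArg (Polynomial.map f) h

theorem eval_sq_sub_one (h : IsPellAbel D A B) (x : R) :
    A.eval x ^ 2 - 1 = D.eval x * B.eval x ^ 2 := by
  have := congrArg (eval x) h
  simp only [eval_sub, eval_mul, eval_pow, eval_one] at this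
  linear_combination this

theorem exists_isPrimitivePellAbel (h : IsPellAbel D A B) (hB : B ≠ 0) :
    ∃ A₀ B₀ : R[X], IsPrimitivePellAbel D A₀ B₀ := by
  obtain ⟨⟨A₀, B₀⟩, ⟨hB₀, h₀⟩, hmin⟩ := exists_minimalFor_of_wellFoundedLT
    (fun p : R[X] × R[X] ↦ p.2 ≠ 0 ∧ IsPellAbel D p.1 p.2) (fun p ↦ p.1.natDegree) ⟨(A, B), hB, h⟩
  exact ⟨A₀, B₀, h₀, hB₀, fun A' B' hB' h' ↦
    (le_total _ _).elim id fun hle ↦ hmin (j := (A', B')) ⟨hB', h'⟩ hle⟩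

theorem isPellAbelPow_succ (h₀ : IsPellAbel D A₀ B₀) {k : ℤ} (h : IsPellAbelPow A₀ B₀ k A B) :
    IsPellAbelPow A₀ B₀ (k + 1) (A * A₀ + D * (B * B₀)) (A * B₀ + B * A₀) := by
  obtain ⟨s, hs, rfl, rfl⟩ := h
  have hT := congrArg (·.comp A₀) (Chebyshev.T_eq_X_mul_T_sub_pol_U R (k - 1))
  have hU := congrArg (·.comp A₀) (Chebyshev.U_eq_X_mul_U_add_T R (k - 1))
  simp only [sub_comp, mul_comp, add_comp, one_comp, pow_comp, X_comp,
    show k - 1 + 2 = k + 1 by ring, show k - 1 + 1 = k by ring] at hT hU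
  refine ⟨s, hs, ?_, ?_⟩
  · rw [IsPellAbel] at h₀
    linear_combination -s * hT - s * (Chebyshev.U R (k - 1)).comp A₀ * h₀
  · rw [add_sub_cancel_right, hU]
    ring

theorem isPellAbelPow_succ_of_mul_inv (h₀ : IsPellAbel D A₀ B₀) {k : ℤ}
    (h : IsPellAbelPow A₀ B₀ k (A * A₀ - D * (B * B₀)) (B * A₀ - A * B₀)) :
    IsPellAbelPow A₀ B₀ (k + 1) A B := by
  rw [IsPellAbel] at h₀
  convert isPellAbelPow_succ h₀ h using 1
  · linear_combination -A * h₀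
  · linear_combination -B * h₀

end IsPellAbel

section IsDomain

variable [IsDomain R]

namespace IsPellAbel

theorem isRoot (h : IsPellAbel D A B) {x : R} (hA : A.eval x ^ 2 = 1) (hB : B.eval x ≠ 0) :
    D.IsRoot x := by
  have := h.eval_sq_sub_one x
  rw [hA, sub_self, eq_comm] at this
  exact (mul_eq_zero.1 this).resolve_right (pow_ne_zero 2 hB)

theorem natDegree_add_two_mul (h : IsPellAbel D A B) (hD : D ≠ 0) (hB : B ≠ 0) :
    D.natDegree + 2 * B.natDegree = 2 * A.natDegree := by
  have hDB : D * B ^ 2 = A ^ 2 - C 1 := by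
    rw [C_1, eq_sub_iff_add_eq', ← h]
    ring
  rw [← natDegree_pow, ← natDegree_mul hD (pow_ne_zero 2 hB), hDB, natDegree_sub_C, natDegree_pow]

theorem natDegree_mul_lt_or [NeZero (2 : R)] (h₀ : IsPellAbel D A₀ B₀) (h : IsPellAbel D A B)
    (hA₀ : A₀.natDegree ≠ 0) (hle : A₀.natDegree ≤ A.natDegree) :
    (A * A₀ + D * (B * B₀)).natDegree < A.natDegree ∨
      (A * A₀ - D * (B * B₀)).natDegree < A.natDegree := by
  set P := A * A₀ + D * (B * B₀)
  set Q := A * A₀ - D * (B * B₀)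
  have hne₀ : A₀ ≠ 0 := ne_zero_of_natDegree_gt (Nat.pos_of_ne_zero hA₀)
  have hne : A ≠ 0 := ne_zero_of_natDegree_gt ((Nat.pos_of_ne_zero hA₀).trans_le hle)
  have hprod : P * Q = A ^ 2 + A₀ ^ 2 - C 1 := by
    rw [C_1]
    unfold IsPellAbel at h₀ h
    linear_combination (A₀ ^ 2 - 1) * h + D * B ^ 2 * h₀
  have hsum : P + Q = C 2 * (A * A₀) := by
    rw [C_ofNat]
    ring
  have hprod_deg : (P * Q).natDegree ≤ 2 * A.natDegree := by
    rw [hprod, natDegree_sub_C]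
    refine natDegree_add_le_of_degree_le natDegree_pow_le (natDegree_pow_le.trans ?_)
    lia
  have hsum_deg : A.natDegree + A₀.natDegree ≤ max P.natDegree Q.natDegree := by
    rw [← natDegree_mul hne hne₀, ← natDegree_C_mul (two_ne_zero' R), ← hsum]
    exact natDegree_add_le P Q
  rcases eq_or_ne P 0 with hP | hP
  · left; rw [hP, natDegree_zero]; lia
  rcases eq_or_ne Q 0 with hQ | hQ
  · right; rw [hQ, natDegree_zero]; lia
  rw [natDegree_mul hP hQ] at hprod_deg
  lia

end IsPellAbel

theorem IsPrimitivePellAbel.exists_isPellAbelPow [NeZero (2 : R)]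
    (h₀ : IsPrimitivePellAbel D A₀ B₀) (hD : D.natDegree ≠ 0) (h : IsPellAbel D A B) :
    ∃ k : ℤ, IsPellAbelPow A₀ B₀ k A B := by
  have hA₀ : A₀.natDegree ≠ 0 := by
    have := h₀.isPellAbel.natDegree_add_two_mul (ne_zero_of_natDegree_gt hD.bot_lt) h₀.ne_zero
    lia
  induction hN : A.natDegree using Nat.strong_induction_on generalizing A B with
  | _ N ih =>
    subst hN
    rcases eq_or_ne B 0 with rfl | hB
    · exact ⟨0, A, by simpa [IsPellAbel] using h, by simp, by simp⟩
    have descend {B' : R[X]} (h' : IsPellAbel D A B')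
        (hlt : (A * A₀ - D * (B' * B₀)).natDegree < A.natDegree) :
        ∃ k : ℤ, IsPellAbelPow A₀ B₀ k A B' := by
      have hmul : IsPellAbel D (A * A₀ - D * (B' * B₀)) (B' * A₀ - A * B₀) := by
        convert h₀.isPellAbel.neg_right.mul h' using 1 <;> ring
      obtain ⟨k, hk⟩ := ih _ hlt hmul rfl
      exact ⟨k + 1, h₀.isPellAbel.isPellAbelPow_succ_of_mul_inv hk⟩
    rcases h₀.isPellAbel.natDegree_mul_lt_or h hA₀ (h₀.natDegree_le hB h) with hlt | hlt
    · obtain ⟨k, hk⟩ := descend h.neg_right (by simpa [sub_eq_add_neg] using hlt)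
      exact ⟨-k, neg_neg B ▸ hk.neg_right⟩
    · exact descend h hlt

theorem IsPellAbelPow.natDegree_eq [NeZero (2 : R)] {k : ℤ} (h : IsPellAbelPow A₀ B₀ k A B) :
    A.natDegree = k.natAbs * A₀.natDegree := by
  obtain ⟨s, hs, rfl, -⟩ := h
  rcases sq_eq_one_iff.1 hs with rfl | rfl <;> simp [natDegree_comp, Chebyshev.natDegree_T]

end IsDomain

end PellAbel

theorem ofReal_re_eq_of_eval_T_eq_ofReal {k : ℤ} (hk : k ≠ 0) {w : ℂ} {t : ℝ}
    (ht : t ∈ Icc (-1) 1) (h : (Chebyshev.T ℂ k).eval w = t) : (w.re : ℂ) = w := by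
  obtain ⟨z, rfl⟩ := Complex.cos_surjective w
  have hk' : (k : ℝ) ≠ 0 := Int.cast_ne_zero.2 hk
  rw [Chebyshev.T_complex_cos, ← Real.cos_arccos ht.1 ht.2, Complex.ofReal_cos,
    Complex.cos_eq_cos_iff] at h
  have him : z.im = 0 := by
    obtain ⟨j, h | h⟩ := h <;> simpa [hk'] using congrArg Complex.im h
  rw [← Complex.re_add_im z, him, Complex.ofReal_zero, zero_mul, add_zero, ← Complex.ofReal_cos,
    Complex.ofReal_re]

theorem isUnit_of_injOn_eval_T {k : ℤ}
    (h : InjOn (fun x ↦ (Chebyshev.T ℝ k).eval x) (Icc (-1) 1)) : IsUnit k := by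
  rcases eq_or_ne k 0 with rfl | hk
  · have hone : (1 : ℝ) = -1 := h (by simp) (by simp) (by simp)
    norm_num at hone
  have hk' : (k : ℝ) ≠ 0 := Int.cast_ne_zero.2 hk
  have hcos : Real.cos (2 * Real.pi / k) = 1 := by
    refine h (Real.cos_mem_Icc _) (by simp) ?_
    simp only [Chebyshev.T_real_cos, mul_div_cancel₀ _ hk', Real.cos_two_pi, Chebyshev.T_eval_one]
  obtain ⟨m, hm⟩ := (Real.cos_eq_one_iff _).1 hcos
  refine IsUnit.of_mul_eq_one m ?_
  have hkm : (k * m : ℝ) = 1 := by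
    rw [eq_div_iff hk'] at hm
    refine mul_right_cancel₀ Real.two_pi_pos.ne' ?_
    linear_combination hm
  exact_mod_cast hkm

theorem eval_T_eq_ofReal_eval_of_comp_eq_map {A : ℝ[X]} {A₀ : ℂ[X]} {k : ℤ}
    (h : (Chebyshev.T ℂ k).comp A₀ = A.map (algebraMap ℝ ℂ)) (x : ℝ) :
    (Chebyshev.T ℂ k).eval (A₀.eval (x : ℂ)) = (A.eval x : ℝ) := by
  rw [← eval_comp, h, eval_map_algebraMap]
  exact (Polynomial.ofReal_eval A x).symm

theorem isUnit_of_T_comp_eq_map {A : ℝ[X]} {A₀ : ℂ[X]} {k : ℤ} {a b : ℝ}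
    (h : (Chebyshev.T ℂ k).comp A₀ = A.map (algebraMap ℝ ℂ)) (hab : a < b)
    (hinj : InjOn (fun x ↦ A.eval x) (Icc a b))
    (hmaps : MapsTo (fun x ↦ A.eval x) (Icc a b) (Icc (-1) 1))
    (ha : A₀.eval (a : ℂ) ^ 2 = 1) (hb : A₀.eval (b : ℂ) ^ 2 = 1) : IsUnit k := by
  have ha_mem : a ∈ Icc a b := left_mem_Icc.2 hab.le
  have hb_mem : b ∈ Icc a b := right_mem_Icc.2 hab.le
  have hT := eval_T_eq_ofReal_eval_of_comp_eq_map h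
  have hk : k ≠ 0 := by
    rintro rfl
    have hone (x : ℝ) : A.eval x = 1 := by simpa using (hT x).symm
    exact hab.ne (hinj ha_mem hb_mem (by simp only [hone]))
  set f : ℝ → ℝ := fun x ↦ (A₀.eval (x : ℂ)).re
  have hf {x : ℝ} (hx : x ∈ Icc a b) : (f x : ℂ) = A₀.eval (x : ℂ) :=
    ofReal_re_eq_of_eval_T_eq_ofReal hk (hmaps hx) (hT x)
  have hinj_comp : InjOn ((fun x ↦ (Chebyshev.T ℝ k).eval x) ∘ f) (Icc a b) := by
    refine hinj.congr fun x hx ↦ Complex.ofReal_injective ?_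
    rw [Function.comp_apply, Chebyshev.complex_ofReal_eval_T, hf hx, hT]
  have hend {x : ℝ} (hx : x ∈ Icc a b) (h1 : A₀.eval (x : ℂ) ^ 2 = 1) : f x = 1 ∨ f x = -1 := by
    rw [← hf hx] at h1
    exact sq_eq_one_iff.1 (by exact_mod_cast h1)
  have hne : f a ≠ f b := fun hfab ↦ hab.ne <| hinj_comp ha_mem hb_mem <|
    congrArg (fun y ↦ (Chebyshev.T ℝ k).eval y) hfab
  have hsurj : Icc (-1) 1 ⊆ f '' Icc a b := by
    have hcont : Continuous f :=
      Complex.continuous_re.comp (A₀.continuous.comp Complex.continuous_ofReal)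
    have huIcc : Icc (-1) 1 = uIcc (f a) (f b) := by
      rcases hend ha_mem ha with ha | ha <;> rcases hend hb_mem hb with hb | hb <;> simp_all
    rw [huIcc, ← uIcc_of_le hab.le]
    exact intermediate_value_uIcc hcont.continuousOn
  exact isUnit_of_injOn_eval_T (hinj_comp.image_of_comp.mono hsurj)

theorem IsPellAbelPow.isUnit_of_injOn {A : ℝ[X]} {A₀ B₀ B : ℂ[X]} {k : ℤ} {a b : ℝ}
    (h : IsPellAbelPow A₀ B₀ k (A.map (algebraMap ℝ ℂ)) B) (hab : a < b)
    (hinj : InjOn (fun x ↦ A.eval x) (Icc a b))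
    (hmaps : MapsTo (fun x ↦ A.eval x) (Icc a b) (Icc (-1) 1))
    (ha : A₀.eval (a : ℂ) ^ 2 = 1) (hb : A₀.eval (b : ℂ) ^ 2 = 1) : IsUnit k := by
  obtain ⟨s, hs, hA, -⟩ := h
  rcases sq_eq_one_iff.1 hs with rfl | rfl
  · exact isUnit_of_T_comp_eq_map (by rw [hA, one_mul]) hab hinj hmaps ha hb
  · have hneg : (Chebyshev.T ℂ k).comp A₀ = (-A).map (algebraMap ℝ ℂ) := by
      rw [Polynomial.map_neg, hA, neg_one_mul, neg_neg]
    refine isUnit_of_T_comp_eq_map hneg hab ?_ ?_ ha hb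
    · simpa only [eval_neg, Function.comp_def] using neg_injective.comp_injOn hinj
    · intro x hx
      simpa only [eval_neg, neg_mem_Icc_iff, neg_neg] using hmaps hx

theorem IsPellAbel.isPrimitivePellAbel_map_of_injOn {D A B : ℝ[X]} {a b : ℝ}
    (h : IsPellAbel D A B) (hB : B ≠ 0) (hD : D.natDegree ≠ 0) (hab : a < b)
    (hinj : InjOn (fun x ↦ A.eval x) (Icc a b))
    (hmaps : MapsTo (fun x ↦ A.eval x) (Icc a b) (Icc (-1) 1))
    (ha : D.IsRoot a) (hb : D.IsRoot b) :
    IsPrimitivePellAbel (D.map (algebraMap ℝ ℂ)) (A.map (algebraMap ℝ ℂ))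
      (B.map (algebraMap ℝ ℂ)) := by
  have hmap := h.map (algebraMap ℝ ℂ)
  have hB' : B.map (algebraMap ℝ ℂ) ≠ 0 := Polynomial.map_ne_zero hB
  obtain ⟨A₀, B₀, h₀⟩ := hmap.exists_isPrimitivePellAbel hB'
  obtain ⟨k, hk⟩ := h₀.exists_isPellAbelPow (by rwa [natDegree_map]) hmap
  have hend {x : ℝ} (hx : D.IsRoot x) : A₀.eval (x : ℂ) ^ 2 = 1 := by
    have := h₀.isPellAbel.eval_sq_sub_one (x : ℂ)
    have hDx : (D.map (algebraMap ℝ ℂ)).eval (x : ℂ) = 0 := IsRoot.map (f := algebraMap ℝ ℂ) hx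
    rwa [hDx, zero_mul, sub_eq_zero] at this
  have hunit : IsUnit k := hk.isUnit_of_injOn hab hinj hmaps (hend ha) (hend hb)
  refine ⟨hmap, hB', fun A' B' hB'' h' ↦ ?_⟩
  rw [hk.natDegree_eq, Int.isUnit_iff_natAbs_eq.1 hunit, one_mul]
  exact h₀.natDegree_le hB'' h'

theorem sq_dvd_of_dvd_of_dvd_derivative {R : Type*} [CommRing R] {B E : R[X]} (hB : B.Separable)
    (h : B ∣ E) (h' : B ∣ derivative E) : B ^ 2 ∣ E := by
  obtain ⟨Q, rfl⟩ := h
  rw [derivative_mul, add_comm] at h'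
  have hQ : B ∣ Q := IsCoprime.dvd_of_dvd_mul_left hB ((dvd_add_right (dvd_mul_right B _)).1 h')
  rw [sq]
  exact mul_dvd_mul_left B hQ

theorem IsPellAbel.separable {K : Type*} [Field K] [NeZero (2 : K)] {D A B M : K[X]}
    (h : IsPellAbel D A B) (hB : B ≠ 0) (hM : derivative A = B * M) (hcop : IsCoprime D M) :
    D.Separable := by
  rw [IsPellAbel] at h
  have hkey : C 2 * (A * M) = derivative D * B + D * (2 * derivative B) := by
    refine mul_left_cancel₀ hB ?_
    have := congrArg derivative h
    simp only [derivative_sub, derivative_mul, derivative_sq, derivative_one, hM] at this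
    rw [C_ofNat] at this ⊢
    linear_combination this
  have hDA : IsCoprime D A := ⟨-B ^ 2, A, by linear_combination h⟩
  have h2 : IsUnit (C 2 : K[X]) := isUnit_C.2 (isUnit_iff_ne_zero.2 two_ne_zero)
  have hDB : IsCoprime D (derivative D * B) := by
    rw [← IsCoprime.add_mul_left_right_iff (z := 2 * derivative B), ← hkey]
    exact (isCoprime_mul_unit_left_right h2 _ _).2 (hDA.mul_right hcop)
  exact hDB.of_mul_right_left

theorem exists_separable_isPellAbel {K ι : Type*} [Field K] [NeZero (2 : K)] [Fintype ι]
    {A : K[X]} {c : K} {x : ι → K} {s : Finset ι} (hx : Function.Injective x)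
    (hA : derivative A = C c * ∏ i, (X - C (x i))) (hc : c ≠ 0)
    (hs : ∀ i, i ∈ s ↔ A.eval (x i) ^ 2 = 1) :
    ∃ D, D.Separable ∧ IsPellAbel D A (∏ i ∈ s, (X - C (x i))) := by
  classical
  set B := ∏ i ∈ s, (X - C (x i))
  set M := C c * ∏ i ∈ sᶜ, (X - C (x i))
  have hA : derivative A = B * M := by
    rw [hA, ← Finset.prod_mul_prod_compl s]
    ring
  have hE' : derivative (A ^ 2 - 1) = B * (2 * A * M) := by
    rw [derivative_sub, derivative_sq, hA, derivative_one, C_ofNat]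
    ring
  have hB : B.Separable := separable_prod_X_sub_C_iff'.2 fun i _ j _ h ↦ hx h
  have hBE : B ∣ A ^ 2 - 1 :=
    Finset.prod_dvd_of_coprime (fun i _ j _ hij ↦ pairwise_coprime_X_sub_C hx hij) fun i hi ↦
      dvd_iff_isRoot.2 (by simp [(hs i).1 hi])
  obtain ⟨D, hD⟩ := sq_dvd_of_dvd_of_dvd_derivative hB hBE (hE' ▸ dvd_mul_right B _)
  have hpell : IsPellAbel D A B := by
    rw [IsPellAbel]
    linear_combination hD
  have hcop : IsCoprime D M := by
    refine (isCoprime_mul_unit_left_right (isUnit_C.2 hc.isUnit) _ _).2 ?_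
    refine IsCoprime.prod_right fun i hi ↦ ?_
    refine ((irreducible_X_sub_C (x i)).coprime_iff_not_dvd.2 fun hdvd ↦ ?_).symm
    have := hpell.eval_sq_sub_one (x i)
    rw [dvd_iff_isRoot.1 hdvd, zero_mul, sub_eq_zero] at this
    exact Finset.mem_compl.1 hi ((hs i).2 this)
  exact ⟨D, hpell.separable (monic_prod_X_sub_C x s).ne_zero hA hcop, hpell⟩

theorem eq_C_leadingCoeff_mul_prod_X_sub_C {K ι : Type*} [Field K] [Fintype ι] {p : K[X]}
    {x : ι → K} (hx : Function.Injective x) (hroot : ∀ i, p.IsRoot (x i))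
    (hdeg : p.natDegree = Fintype.card ι) : p = C p.leadingCoeff * ∏ i, (X - C (x i)) := by
  refine eq_leadingCoeff_mul_of_monic_of_dvd_of_natDegree_le (monic_prod_X_sub_C x _) ?_ ?_
  · exact Finset.prod_dvd_of_coprime (fun i _ j _ hij ↦ pairwise_coprime_X_sub_C hx hij)
      fun i _ ↦ dvd_iff_isRoot.2 (hroot i)
  · rw [hdeg, natDegree_finsetProd_X_sub_C_eq_card, Finset.card_univ]

section Interval

variable {A : ℝ[X]} {z : ℝ}

theorem strictMonoOn_eval_Ici (hA : 0 < A.natDegree) (hlc : 0 < A.leadingCoeff)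
    (hz : ∀ x, (derivative A).IsRoot x → x ≤ z) : StrictMonoOn (fun x ↦ A.eval x) (Ici z) := by
  have hlc' : 0 < (derivative A).leadingCoeff := by
    rw [leadingCoeff_derivative]
    positivity
  refine strictMonoOn_of_deriv_pos (convex_Ici z) A.continuousOn fun x hx ↦ ?_
  rw [interior_Ici, mem_Ioi] at hx
  rw [Polynomial.deriv]
  exact zero_lt_eval_of_roots_lt_of_leadingCoeff_nonneg (fun y hy ↦ (hz y hy).trans_lt hx) hlc'.le

theorem exists_strictMonoOn_eval_Icc {u v : ℝ} (hA : 0 < A.natDegree) (hlc : 0 < A.leadingCoeff)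
    (hz : ∀ x, (derivative A).IsRoot x → x ≤ z) (hu : A.eval z < u) (huv : u < v) :
    ∃ a b, z < a ∧ a < b ∧ A.eval a = u ∧ A.eval b = v ∧
      StrictMonoOn (fun x ↦ A.eval x) (Icc a b) := by
  have hmono := strictMonoOn_eval_Ici hA hlc hz
  have htop : Tendsto (fun x ↦ A.eval x) atTop atTop :=
    A.tendsto_atTop_of_leadingCoeff_nonneg (natDegree_pos_iff_degree_pos.1 hA) hlc.le
  have himage : Ici (A.eval z) ⊆ (fun x ↦ A.eval x) '' Ici z :=
    intermediate_value_Ici A.continuousOn htop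
  obtain ⟨a, ha, rfl⟩ := himage hu.le
  obtain ⟨b, hb, rfl⟩ := himage (hu.trans huv).le
  exact ⟨a, b, (hmono.lt_iff_lt self_mem_Ici ha).1 hu, (hmono.lt_iff_lt ha hb).1 huv, rfl, rfl,
    hmono.mono (Icc_subset_Ici_self.trans (Ici_subset_Ici.2 ha))⟩

theorem IsPellAbel.isPrimitivePellAbel_map_of_eval_lt {D B : ℝ[X]} (h : IsPellAbel D A B)
    (hD : D.natDegree ≠ 0) (hlc : 0 < A.leadingCoeff)
    (hA' : ∀ x, (derivative A).IsRoot x → x ≤ z) (hB : ∀ x, B.IsRoot x → x ≤ z)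
    (hz : A.eval z < -1) :
    IsPrimitivePellAbel (D.map (algebraMap ℝ ℂ)) (A.map (algebraMap ℝ ℂ))
      (B.map (algebraMap ℝ ℂ)) := by
  have hB₀ : B ≠ 0 := by
    rintro rfl
    exact absurd (hB (z + 1) eval_zero) (by simp)
  have hA : 0 < A.natDegree := by
    have := h.natDegree_add_two_mul (ne_zero_of_natDegree_gt hD.bot_lt) hB₀
    lia
  obtain ⟨a, b, hza, hab, ha, hb, hmono⟩ :=
    exists_strictMonoOn_eval_Icc hA hlc hA' hz (show (-1 : ℝ) < 1 by norm_num)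
  have hmaps : MapsTo (fun x ↦ A.eval x) (Icc a b) (Icc (-1) 1) :=
    ha ▸ hb ▸ hmono.monotoneOn.mapsTo_Icc
  have hroot {x : ℝ} (hx : z < x) (hAx : A.eval x ^ 2 = 1) : D.IsRoot x :=
    h.isRoot hAx fun hBx ↦ (hB x hBx).not_gt hx
  exact h.isPrimitivePellAbel_map_of_injOn hB₀ hD hab hmono.injOn hmaps (hroot hza (by simp [ha]))
    (hroot (hza.trans hab) (by simp [hb]))

end Interval

section CriticalValues

variable {𝕜 ι : Type*} [NontriviallyNormedField 𝕜] [Fintype ι]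

theorem hasStrictFDerivAt_eval_add_sum (Q : 𝕜[X]) (R : ι → 𝕜[X]) (y : 𝕜) :
    HasStrictFDerivAt (fun p : (ι → 𝕜) × 𝕜 ↦ (Q + ∑ j, C (p.1 j) * R j).eval p.2)
      ((derivative Q).eval y • ContinuousLinearMap.snd 𝕜 (ι → 𝕜) 𝕜 +
        ∑ j, (R j).eval y • (ContinuousLinearMap.proj (R := 𝕜) (φ := fun _ : ι ↦ 𝕜) j).comp
          (ContinuousLinearMap.fst 𝕜 (ι → 𝕜) 𝕜)) (0, y) := by
  have hsnd := (ContinuousLinearMap.snd 𝕜 (ι → 𝕜) 𝕜).hasStrictFDerivAt (x := (0, y))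
  have heval (P : 𝕜[X]) := (P.hasStrictDerivAt y).comp_hasStrictFDerivAt (0, y) hsnd
  have hcoeff (j : ι) := ((ContinuousLinearMap.proj (R := 𝕜) (φ := fun _ : ι ↦ 𝕜) j).comp
    (ContinuousLinearMap.fst 𝕜 (ι → 𝕜) 𝕜)).hasStrictFDerivAt (x := (0, y))
  simp only [eval_add, eval_finsetSum, eval_mul, eval_C]
  refine (heval Q).add (HasStrictFDerivAt.fun_sum fun j _ ↦ ?_)
  exact ((hcoeff j).mul (heval (R j))).congr_fderiv (by ext <;> simp)

/-- The value and the derivative at `x i` of the sum of `T` and the polynomial of degree less than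
`card ι` with values `h` at the nodes `y`, as a function of `(h, x)`. The inverse function theorem
for this map moves the critical values of `T`. -/
noncomputable def perturbedJet [DecidableEq ι] (T : 𝕜[X]) (y : ι → 𝕜) (p : (ι → 𝕜) × (ι → 𝕜))
    (i : ι) : 𝕜 × 𝕜 :=
  ((T + Lagrange.interpolate Finset.univ y p.1).eval (p.2 i),
    (derivative (T + Lagrange.interpolate Finset.univ y p.1)).eval (p.2 i))

variable {T : 𝕜[X]} {y : ι → 𝕜}

theorem map_perturbedJet_nhds [DecidableEq ι] [CompleteSpace 𝕜] (hy : Function.Injective y)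
    (hT' : ∀ i, (derivative T).eval (y i) = 0)
    (hT'' : ∀ i, (derivative (derivative T)).eval (y i) ≠ 0) :
    map (perturbedJet T y) (𝓝 (0, y)) = 𝓝 (fun i ↦ (T.eval (y i), 0)) := by
  set l : ι → 𝕜[X] := Lagrange.basis Finset.univ y
  have hjet : perturbedJet T y = fun p i ↦ ((T + ∑ j, C (p.1 j) * l j).eval (p.2 i),
      (derivative T + ∑ j, C (p.1 j) * derivative (l j)).eval (p.2 i)) := by
    ext p i <;> simp [perturbedJet, Lagrange.interpolate_apply, l]
  have hproj (i : ι) := ((ContinuousLinearMap.id 𝕜 (ι → 𝕜)).prodMap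
    (ContinuousLinearMap.proj (R := 𝕜) (φ := fun _ : ι ↦ 𝕜) i)).hasStrictFDerivAt (x := (0, y))
  have hderiv := hasStrictFDerivAt_pi.2 fun i ↦
    ((hasStrictFDerivAt_eval_add_sum T l (y i)).comp (0, y) (hproj i)).prodMk
      ((hasStrictFDerivAt_eval_add_sum (derivative T) (fun j ↦ derivative (l j)) (y i)).comp
        (0, y) (hproj i))
  have hbase : perturbedJet T y (0, y) = fun i ↦ (T.eval (y i), 0) := by
    ext i <;> simp [hjet, hT']
  have hl (h : ι → 𝕜) (i : ι) : ∑ j, (l j).eval (y i) * h j = h i := by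
    simpa [Lagrange.interpolate_apply, eval_finsetSum, mul_comm, l] using
      Lagrange.eval_interpolate_at_node h hy.injOn (Finset.mem_univ i)
  rw [← hbase, hjet]
  refine hderiv.map_nhds_eq_of_surj (LinearMap.range_eq_top.2 fun v ↦ ?_)
  refine ⟨(fun i ↦ (v i).1, fun i ↦ ((v i).2 - ∑ j, (derivative (l j)).eval (y i) * (v j).1) /
    (derivative (derivative T)).eval (y i)), ?_⟩
  ext i
  · simp [hT', hl]
  · simp [mul_div_cancel₀ _ (hT'' i)]

theorem eventually_exists_eval_eq_and_derivative_eval_eq_zero [CompleteSpace 𝕜]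
    (hy : Function.Injective y) (hT' : ∀ i, (derivative T).eval (y i) = 0)
    (hT'' : ∀ i, (derivative (derivative T)).eval (y i) ≠ 0) {W : Set (ι → 𝕜)} (hW : W ∈ 𝓝 y) :
    ∀ᶠ v in 𝓝 (fun i ↦ T.eval (y i)), ∃ H : 𝕜[X], H.degree < Fintype.card ι ∧ ∃ x ∈ W,
      ∀ i, (T + H).eval (x i) = v i ∧ (derivative (T + H)).eval (x i) = 0 := by
  classical
  have hmem : perturbedJet T y '' (univ ×ˢ W) ∈ 𝓝 (fun i ↦ (T.eval (y i), 0)) := by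
    rw [← map_perturbedJet_nhds hy hT' hT'']
    exact image_mem_map (prod_mem_nhds univ_mem hW)
  have hcont : Continuous (fun (v : ι → 𝕜) (i : ι) ↦ (v i, (0 : 𝕜))) := by fun_prop
  filter_upwards [hcont.continuousAt hmem] with v hv
  obtain ⟨⟨h, x⟩, ⟨-, hx⟩, hv⟩ := hv
  exact ⟨Lagrange.interpolate Finset.univ y h, Lagrange.degree_interpolate_lt h hy.injOn, x, hx,
    fun i ↦ Prod.ext_iff.1 (congrFun hv i)⟩

end CriticalValues

section Chebyshev

variable {m : ℕ}

/-- The critical points of the Chebyshev polynomial `T (m + 1)`, in decreasing order. -/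
noncomputable def chebyshevNode (m : ℕ) (i : Fin m) : ℝ :=
  Chebyshev.node (m + 1) (i + 1)

theorem strictAnti_chebyshevNode : StrictAnti (chebyshevNode m) := fun i j hij ↦
  Chebyshev.node_lt (by lia) (by simpa using hij)

theorem eval_T_chebyshevNode (i : Fin m) :
    (Chebyshev.T ℝ (m + 1)).eval (chebyshevNode m i) = (-1) ^ (i.val + 1) := by
  exact_mod_cast Chebyshev.eval_T_real_node (n := m + 1) (by simp)

theorem derivative_eval_T_chebyshevNode (i : Fin m) :
    (derivative (Chebyshev.T ℝ (m + 1))).eval (chebyshevNode m i) = 0 := by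
  rw [← Polynomial.deriv]
  exact_mod_cast (Chebyshev.isLocalExtr_T_real (n := m + 1) (k := i + 1) (by lia) (by lia)
    (by lia)).deriv_eq_zero

theorem derivative_derivative_eval_T_chebyshevNode_ne_zero (i : Fin m) :
    (derivative (derivative (Chebyshev.T ℝ (m + 1)))).eval (chebyshevNode m i) ≠ 0 := by
  intro h
  have := congrArg (eval (chebyshevNode m i))
    (Chebyshev.one_sub_X_sq_mul_derivative_derivative_T_eq_poly_in_T (R := ℝ) (m + 1))
  exact Nat.cast_add_one_ne_zero (R := ℝ) m
    (by simpa [h, derivative_eval_T_chebyshevNode, eval_T_chebyshevNode] using this)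

theorem isOpen_setOf_strictAnti {ι α : Type*} [Preorder ι] [Finite ι] [LinearOrder α]
    [TopologicalSpace α] [OrderClosedTopology α] : IsOpen {x : ι → α | StrictAnti x} := by
  simp only [StrictAnti, ofPred_forall]
  refine isOpen_iInter_of_finite fun i ↦ isOpen_iInter_of_finite fun j ↦
    isOpen_iInter_of_finite fun _ ↦ ?_
  exact isOpen_lt (continuous_apply j) (continuous_apply i)

theorem eventually_exists_eval_eq_and_derivative_eval_eq_zero_of_T :
    ∀ᶠ v in 𝓝 (fun i : Fin m ↦ (-1 : ℝ) ^ (i.val + 1)), ∃ A : ℝ[X], A.natDegree = m + 1 ∧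
      0 < A.leadingCoeff ∧ ∃ x : Fin m → ℝ, StrictAnti x ∧
        ∀ i, A.eval (x i) = v i ∧ (derivative A).eval (x i) = 0 := by
  have key := eventually_exists_eval_eq_and_derivative_eval_eq_zero
    strictAnti_chebyshevNode.injective derivative_eval_T_chebyshevNode
    derivative_derivative_eval_T_chebyshevNode_ne_zero
    (isOpen_setOf_strictAnti.mem_nhds (strictAnti_chebyshevNode (m := m)))
  simp only [eval_T_chebyshevNode] at key
  filter_upwards [key] with v hv
  obtain ⟨H, hH, x, hx, hv⟩ := hv
  have hdeg : H.degree < (Chebyshev.T ℝ (m + 1)).degree := by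
    rw [Chebyshev.degree_T]
    refine hH.trans_le ?_
    norm_cast
    simp
  refine ⟨Chebyshev.T ℝ (m + 1) + H, ?_, ?_, x, hx, hv⟩
  · rw [natDegree_add_eq_left_of_degree_lt hdeg, Chebyshev.natDegree_T]
    lia
  · rw [leadingCoeff_add_of_degree_lt' hdeg]
    simp

end Chebyshev

theorem exists_polynomial_with_perturbed_critical_values (m e : ℕ) :
    ∃ A : ℝ[X], A.natDegree = m + 1 ∧ 0 < A.leadingCoeff ∧
      ∃ δ > 0, ∃ x : Fin m → ℝ, StrictAnti x ∧ ∀ i, (derivative A).IsRoot (x i) ∧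
        A.eval (x i) = (if i.val < e then 1 + δ else 1) * (-1) ^ (i.val + 1) := by
  set v : ℝ → Fin m → ℝ := fun δ i ↦ (if i.val < e then 1 + δ else 1) * (-1) ^ (i.val + 1)
  have hv : Continuous v := by
    refine continuous_pi fun i ↦ ?_
    by_cases hi : i.val < e <;> simp only [v, hi, if_true, if_false] <;> fun_prop
  have hv₀ : v 0 = fun i ↦ (-1) ^ (i.val + 1) := by
    ext i
    simp [v]
  have hlim : Tendsto v (𝓝[>] 0) (𝓝 fun i ↦ (-1) ^ (i.val + 1)) :=
    hv₀ ▸ hv.continuousWithinAt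
  obtain ⟨δ, ⟨A, hdeg, hlc, x, hx, hA⟩, hδ⟩ :=
    ((hlim.eventually eventually_exists_eval_eq_and_derivative_eval_eq_zero_of_T).and
      self_mem_nhdsWithin).exists
  exact ⟨A, hdeg, hlc, δ, hδ, x, hx, fun i ↦ ⟨(hA i).2, (hA i).1⟩⟩

theorem mul_neg_one_pow_sq_eq_one_iff {r : ℝ} (hr : 0 ≤ r) (k : ℕ) :
    (r * (-1) ^ k) ^ 2 = 1 ↔ r = 1 := by
  rw [mul_pow, ← pow_mul, mul_comm k, pow_mul, neg_one_sq, one_pow, mul_one,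
    pow_eq_one_iff_of_nonneg hr two_ne_zero]

theorem exists_separable_isPrimitivePellAbel_map {m e : ℕ} (he : 1 ≤ e) (hem : e ≤ m) :
    ∃ D A B : ℝ[X], D.Separable ∧ D.natDegree = 2 * (e + 1) ∧ A.natDegree = m + 1 ∧
      IsPrimitivePellAbel (D.map (algebraMap ℝ ℂ)) (A.map (algebraMap ℝ ℂ))
        (B.map (algebraMap ℝ ℂ)) := by
  obtain ⟨A, hdeg, hlc, δ, hδ, x, hx, hcrit⟩ :=
    exists_polynomial_with_perturbed_critical_values m e
  set s : Finset (Fin m) := (Finset.univ.filter fun i ↦ i.val < e)ᶜ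
  have hs (i : Fin m) : i ∈ s ↔ A.eval (x i) ^ 2 = 1 := by
    rw [(hcrit i).2, mul_neg_one_pow_sq_eq_one_iff (by split_ifs <;> positivity)]
    simp [s, hδ.ne']
  have hA' : derivative A = C (derivative A).leadingCoeff * ∏ i, (X - C (x i)) :=
    eq_C_leadingCoeff_mul_prod_X_sub_C hx.injective (fun i ↦ (hcrit i).1)
      (by rw [natDegree_derivative, hdeg, Fintype.card_fin, Nat.add_sub_cancel])
  have hlc' : (derivative A).leadingCoeff ≠ 0 := by
    rw [leadingCoeff_derivative, hdeg]
    positivity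
  obtain ⟨D, hsep, hpell⟩ := exists_separable_isPellAbel hx.injective hA' hlc' hs
  have hD : D.natDegree = 2 * (e + 1) := by
    have := hpell.natDegree_add_two_mul hsep.ne_zero (monic_prod_X_sub_C x s).ne_zero
    rw [hdeg, natDegree_finsetProd_X_sub_C_eq_card, Finset.card_compl, Fin.card_filter_val_lt,
      Fintype.card_fin] at this
    lia
  set z := x ⟨0, by lia⟩
  have hxz (i : Fin m) : x i ≤ z := hx.antitone (Nat.zero_le i)
  have hroot (t : Finset (Fin m)) (y : ℝ) (hy : (∏ i ∈ t, (X - C (x i))).IsRoot y) : y ≤ z := by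
    obtain ⟨i, -, hi⟩ := (isRoot_prod t _ y).1 hy
    exact (root_X_sub_C.1 hi).symm ▸ hxz i
  have hz : A.eval z < -1 := by
    rw [(hcrit _).2, if_pos (by lia)]
    simp [hδ]
  refine ⟨D, A, _, hsep, hD, hdeg, hpell.isPrimitivePellAbel_map_of_eval_lt (by lia) hlc
    (fun y hy ↦ hroot Finset.univ y ?_) (hroot s) hz⟩
  rw [hA'] at hy
  exact (root_mul.1 hy).resolve_left (not_isRoot_C _ y hlc')

theorem stmt1 (n d : ℕ) (hd : 2 ≤ d) (hn : d ≤ n) :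
    ∃ D A B : Polynomial ℂ, Squarefree D ∧ D.natDegree = 2*d ∧
      B ≠ 0 ∧ A ^ 2 - D * B ^ 2 = 1 ∧ A.natDegree = n ∧
      ∀ A' B' : Polynomial ℂ, B' ≠ 0 → A' ^ 2 - D * B' ^ 2 = 1 → n ≤ A'.natDegree := by
  obtain ⟨e, rfl⟩ := Nat.exists_eq_add_of_le' (one_le_two.trans hd)
  obtain ⟨m, rfl⟩ := Nat.exists_eq_add_of_le' (Nat.le_of_add_left_le hn)
  obtain ⟨D, A, B, hsep, hD, hA, hprim⟩ :=
    exists_separable_isPrimitivePellAbel_map (m := m) (e := e) (by lia) (by lia)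
  rw [← natDegree_map (algebraMap ℝ ℂ)] at hD hA
  exact ⟨_, _, _, hsep.map.squarefree, hD, hprim.ne_zero, hprim.isPellAbel, hA,
    fun A' B' hB' h' ↦ hA ▸ hprim.natDegree_le hB' h'⟩
end

section
/- For every integer m ≥ 3, the monodromy group Mon(f_m) of the m-th power polynomial f_m is isomorphic, as a group, to the dihedral group of order 2m. -/
open Polynomial

/-!
The identities `(2 T_m)² = 2 + C_m(4X² - 2)` and `C_m(z + z⁻¹) = z^m + z^(-m)`, where `C_m` is the
rescaled Chebyshev (Dickson) polynomial, turn `f_m(Y) = x` into `C_m(4Y - 2) = 4x - 2`, whose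
solutions are `4Y - 2 = z + z⁻¹` with `z^m + z^(-m) = 4x - 2`. The conjugates of `z` are the `2m`
elements `ζ^i z` and `ζ^i z⁻¹`, which the dihedral group permutes simply transitively, and for
`m ≥ 3` the field generated by the sums `ζ^i z + (ζ^i z)⁻¹` already contains `z`. That `z` has
degree `2m` over `K(x)` holds because its equation `z^(2m) - (4x - 2) z^m + 1 = 0` is linear in `x`.
-/

section ChebyshevAndDickson

variable {R : Type*} [CommRing R]

lemma chebyshev_C_sq (n : ℤ) :
    Chebyshev.C R n ^ 2 = (Chebyshev.C R n).comp (X ^ 2 - 2) + 2 := by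
  rw [sq, Chebyshev.C_mul_C, sub_self, Chebyshev.C_zero, ← two_mul, mul_comm, Chebyshev.C_mul,
    Chebyshev.C_two]

lemma C_four_mul_eq_dickson_comp_of_comp_X_sq_eq_T_sq {m : ℕ} {f : R[X]}
    (hf : f.comp (X ^ 2) = Chebyshev.T R m ^ 2) :
    C 4 * f = (dickson 1 1 m).comp (C 4 * X + C (-2)) + C 2 := by
  apply expand_injective two_pos
  have hsub : (C 4 * X + C (-2) : R[X]).comp (X ^ 2) = (X ^ 2 - 2 : R[X]).comp (2 * X) := by
    simp only [add_comp, neg_comp, mul_comp, X_comp, sub_comp, pow_comp, ofNat_comp, map_neg,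
      map_ofNat]
    ring
  calc expand R 2 (C 4 * f) = (2 * Chebyshev.T R m) ^ 2 := by
        rw [expand_eq_comp_X_pow, mul_comp, C_comp, hf, map_ofNat]
        ring
    _ = (Chebyshev.C R m ^ 2).comp (2 * X) := by rw [← Chebyshev.C_comp_two_mul_X, pow_comp]
    _ = (Chebyshev.C R m).comp ((X ^ 2 - 2 : R[X]).comp (2 * X)) + 2 := by
        rw [chebyshev_C_sq, add_comp, comp_assoc, ofNat_comp, Nat.cast_two]
    _ = expand R 2 ((dickson 1 1 m).comp (C 4 * X + C (-2)) + C 2) := by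
        rw [expand_eq_comp_X_pow, add_comp, comp_assoc, hsub, dickson_one_one_eq_chebyshev_C,
          C_comp, map_ofNat]

lemma isMonicOfDegree_dickson_add_one [Nontrivial R] (k : ℕ) (a : R) :
    ∀ n : ℕ, IsMonicOfDegree (dickson k a (n + 1)) (n + 1)
  | 0 => by simpa only [zero_add, dickson_one] using isMonicOfDegree_X R
  | 1 => by
    have hconst : (3 - k : R[X]) = C (3 - k : R) := by
      rw [C_sub, map_natCast, map_ofNat]
    rw [one_add_one_eq_two, dickson_two, hconst, ← C_mul]
    exact (isMonicOfDegree_X_pow R 2).sub (by rw [natDegree_C]; exact two_pos)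
  | n + 2 => by
    rw [dickson_add_two, add_comm (n + 2) 1]
    refine ((isMonicOfDegree_X R).mul (isMonicOfDegree_dickson_add_one k a (n + 1))).sub ?_
    calc (C a * dickson k a (n + 1)).natDegree
        ≤ (dickson k a (n + 1)).natDegree := natDegree_C_mul_le _ _
      _ = n + 1 := (isMonicOfDegree_dickson_add_one k a n).natDegree_eq
      _ < 1 + (n + 2) := by omega

lemma isMonicOfDegree_dickson_sub_C [Nontrivial R] {n : ℕ} (hn : n ≠ 0) (k : ℕ) (a c : R) :
    IsMonicOfDegree (dickson k a n - C c) n := by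
  obtain ⟨n, rfl⟩ := Nat.exists_eq_succ_of_ne_zero hn
  refine (isMonicOfDegree_dickson_add_one k a n).sub ?_
  rw [natDegree_C]
  exact n.succ_pos

end ChebyshevAndDickson

section Field

variable {L : Type*} [Field L]

lemma add_inv_eq_add_inv_iff {a b : L} (ha : a ≠ 0) (hb : b ≠ 0) :
    a + a⁻¹ = b + b⁻¹ ↔ a = b ∨ a = b⁻¹ := by
  have hfactor : a + a⁻¹ - (b + b⁻¹) = (a - b) * (a - b⁻¹) * a⁻¹ := by
    field_simp
    ring
  rw [← sub_eq_zero, hfactor, mul_eq_zero_iff_right (inv_ne_zero ha), mul_eq_zero, sub_eq_zero,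
    sub_eq_zero]

lemma splits_of_injective_of_natDegree_le_card {ι : Type*} [Fintype ι] {p : L[X]} (hp : p ≠ 0)
    {w : ι → L} (hw : Function.Injective w) (hroot : ∀ i, p.IsRoot (w i))
    (hdeg : p.natDegree ≤ Fintype.card ι) : p.Splits := by
  classical
  have hsub : Finset.univ.image w ⊆ p.roots.toFinset := by
    intro v hv
    obtain ⟨i, -, rfl⟩ := Finset.mem_image.1 hv
    exact Multiset.mem_toFinset.2 ((mem_roots hp).2 (hroot i))
  rw [splits_iff_card_roots]
  refine (card_roots' p).antisymm (hdeg.trans ?_)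
  calc Fintype.card ι = (Finset.univ.image w).card :=
        (Finset.card_image_of_injective _ hw).symm
    _ ≤ p.roots.toFinset.card := Finset.card_le_card hsub
    _ ≤ p.roots.card := p.roots.toFinset_card_le

end Field

section AffineSubstitution

variable {F : Type*} [Field F]

lemma isSplittingField_C_mul_comp_affine (L : Type*) [Field L] [Algebra F L] (q : F[X])
    [hq : q.IsSplittingField F L] {u a : F} (hu : u ≠ 0) (ha : a ≠ 0) (b : F) :
    (C u * q.comp (C a * X + C b)).IsSplittingField F L := by
  rw [isSplittingField_iff_intermediateField] at hq ⊢
  obtain ⟨hsplits, hadjoin⟩ := hq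
  constructor
  · rw [Polynomial.map_mul, map_comp, map_C]
    refine (Splits.C _).mul (hsplits.comp_of_natDegree_le_one ?_)
    exact natDegree_map_le.trans natDegree_linear_le
  · rw [eq_top_iff, ← hadjoin, IntermediateField.adjoin_le_iff]
    intro v hv
    set E := IntermediateField.adjoin F ((C u * q.comp (C a * X + C b)).rootSet L)
    have ha' : algebraMap F L a ≠ 0 := (_root_.map_ne_zero _).2 ha
    obtain ⟨hq0, hv⟩ := mem_rootSet.1 hv
    have hne : C u * q.comp (C a * X + C b) ≠ 0 := by
      refine mul_ne_zero (C_ne_zero.2 hu) fun h ↦ hq0 ?_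
      simp [comp_eq_zero_iff, hq0, ha] at h
    have hmem : (v - algebraMap F L b) / algebraMap F L a ∈ E := by
      refine IntermediateField.subset_adjoin _ _ (mem_rootSet.2 ⟨hne, ?_⟩)
      simp [aeval_comp, mul_div_cancel₀ _ ha', hv]
    have hv_eq : v = algebraMap F L a * ((v - algebraMap F L b) / algebraMap F L a)
        + algebraMap F L b := by
      field_simp
      ring
    rw [hv_eq]
    exact add_mem (mul_mem (E.algebraMap_mem a) hmem) (E.algebraMap_mem b)

lemma nonempty_gal_C_mul_comp_affine_mulEquiv (q : F[X]) {u a : F} (hu : u ≠ 0) (ha : a ≠ 0)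
    (b : F) : Nonempty ((C u * q.comp (C a * X + C b)).Gal ≃* q.Gal) :=
  have := isSplittingField_C_mul_comp_affine q.SplittingField q hu ha b
  ⟨AlgEquiv.autCongr (IsSplittingField.algEquiv q.SplittingField _).symm⟩

end AffineSubstitution

section DihedralTrinomial

/-- The polynomial `X^(2m) - c X^m + 1`, whose roots are the solutions `z` of
`z^m + z^(-m) = c`. -/
noncomputable def dihedralTrinomial {R : Type*} [CommRing R] (m : ℕ) (c : R) : R[X] :=
  X ^ (2 * m) - C c * X ^ m + 1

variable {m : ℕ}

lemma isMonicOfDegree_dihedralTrinomial {R : Type*} [CommRing R] [Nontrivial R] (hm : m ≠ 0)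
    (c : R) : IsMonicOfDegree (dihedralTrinomial m c) (2 * m) := by
  have hlow : (C c * X ^ m - 1 : R[X]).natDegree ≤ m := by compute_degree
  have heq : dihedralTrinomial m c = X ^ (2 * m) - (C c * X ^ m - 1) := by
    rw [dihedralTrinomial]
    ring
  rw [heq]
  exact (isMonicOfDegree_X_pow R _).sub (by omega)

lemma map_dihedralTrinomial {R S : Type*} [CommRing R] [CommRing S] (φ : R →+* S) (m : ℕ)
    (c : R) : (dihedralTrinomial m c).map φ = dihedralTrinomial m (φ c) := by
  simp [dihedralTrinomial]

lemma irreducible_dihedralTrinomial_affine {K : Type*} [Field K] (hm : m ≠ 0) {a : K}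
    (ha : a ≠ 0) (b : K) :
    Irreducible (dihedralTrinomial m (algebraMap K[X] (RatFunc K) (C a * X + C b))) := by
  have hcoprime : IsCoprime (-(C a * X ^ m) : K[X]) (X ^ (2 * m) - C b * X ^ m + 1) := by
    have hunit : X ^ (2 * m) - C b * X ^ m + 1 =
        1 + (-(C a * X ^ m)) * (C a⁻¹ * (C b - X ^ m)) := by
      have hC : C a * C a⁻¹ = 1 := by rw [← C_mul, mul_inv_cancel₀ ha, C_1]
      linear_combination (C b * X ^ m - X ^ (2 * m)) * hC
    rw [hunit]
    exact isCoprime_one_right.add_mul_left_right _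
  have hlinear : Bivariate.swap (dihedralTrinomial m (C a * X + C b : K[X])) =
      C (-(C a * X ^ m)) * X + C (X ^ (2 * m) - C b * X ^ m + 1) := by
    simp only [dihedralTrinomial, map_add, map_sub, map_mul, map_pow, map_one, map_neg,
      Bivariate.swap_X, Bivariate.swap_Y, Bivariate.swap_C_C]
    ring
  rw [← map_dihedralTrinomial, ← (isMonicOfDegree_dihedralTrinomial hm
    _).monic.irreducible_iff_irreducible_map_fraction_map,
    ← MulEquiv.irreducible_iff Bivariate.swap, hlinear]
  refine irreducible_C_mul_X_add_C (neg_ne_zero.2 ?_) hcoprime.isRelPrime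
  exact mul_ne_zero (C_ne_zero.2 ha) (pow_ne_zero _ X_ne_zero)

variable {F L : Type*} [Field F] [Field L] [Algebra F L] {c : F} {z : L}

lemma aeval_dihedralTrinomial_eq_zero_iff (hm : m ≠ 0) :
    aeval z (dihedralTrinomial m c) = 0 ↔ z ≠ 0 ∧ z ^ m + (z ^ m)⁻¹ = algebraMap F L c := by
  rcases eq_or_ne z 0 with rfl | hz
  · simp [dihedralTrinomial, hm]
  · have hzm : z ^ m ≠ 0 := pow_ne_zero m hz
    have hfactor : aeval z (dihedralTrinomial m c) =
        z ^ m * (z ^ m + (z ^ m)⁻¹ - algebraMap F L c) := by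
      simp only [dihedralTrinomial, map_add, map_sub, map_mul, map_pow, aeval_X, aeval_C, map_one]
      field_simp
      ring
    rw [hfactor, mul_eq_zero_iff_left hzm, sub_eq_zero, and_iff_right hz]

lemma aeval_dickson_sub_C_eq_zero (hm : m ≠ 0) (hz : aeval z (dihedralTrinomial m c) = 0) :
    aeval (z + z⁻¹) (dickson 1 1 m - C c) = 0 := by
  obtain ⟨hz0, hzc⟩ := (aeval_dihedralTrinomial_eq_zero_iff hm).1 hz
  rw [map_sub, aeval_C, aeval_def, ← eval_map, map_dickson, map_one,
    dickson_one_one_eval_add_inv _ _ (mul_inv_cancel₀ hz0), inv_pow, hzc, sub_self]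

lemma pow_ne_algebraMap_of_minpoly_eq (hm : m ≠ 0) (hz : minpoly F z = dihedralTrinomial m c)
    (a : F) : z ^ m ≠ algebraMap F L a := by
  intro h
  have hdvd : dihedralTrinomial m c ∣ X ^ m - C a := by
    rw [← hz]
    exact minpoly.dvd F z (by rw [map_sub, map_pow, aeval_X, aeval_C, h, sub_self])
  have hle := natDegree_le_of_dvd hdvd (X_pow_sub_C_ne_zero (Nat.pos_of_ne_zero hm) a)
  rw [(isMonicOfDegree_dihedralTrinomial hm c).natDegree_eq, natDegree_X_pow_sub_C] at hle
  omega

lemma pow_two_mul_ne_one_of_minpoly_eq (hm : m ≠ 0) (hz : minpoly F z = dihedralTrinomial m c) :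
    z ^ (2 * m) ≠ 1 := by
  rw [two_mul, pow_add, Ne, mul_self_eq_one_iff, not_or]
  constructor
  · simpa using pow_ne_algebraMap_of_minpoly_eq hm hz 1
  · simpa using pow_ne_algebraMap_of_minpoly_eq hm hz (-1)

end DihedralTrinomial

section CharactersOfZMod

variable {m : ℕ} {M : Type*} [CommMonoid M]

lemma addChar_zmod_pow_eq_one (χ : AddChar (ZMod m) M) (i : ZMod m) : χ i ^ m = 1 := by
  rw [← AddChar.map_nsmul_eq_pow, nsmul_eq_mul, ZMod.natCast_self, zero_mul,
    AddChar.map_zero_eq_one]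

lemma addChar_zmod_one_sq_ne_one (hm : 3 ≤ m) {χ : AddChar (ZMod m) M}
    (hχ : Function.Injective χ) : χ 1 ^ 2 ≠ 1 := by
  rw [← AddChar.map_nsmul_eq_pow, ← AddChar.map_zero_eq_one χ, hχ.ne_iff, nsmul_one, Ne,
    ZMod.natCast_eq_zero_iff]
  exact Nat.not_dvd_of_pos_of_lt two_pos hm

lemma zmodChar_injective [NeZero m] {ζ : M} (hζ : IsPrimitiveRoot ζ m) :
    Function.Injective (AddChar.zmodChar m hζ.pow_eq_one) := fun i j hij ↦
  ZMod.val_injective m (hζ.pow_inj (ZMod.val_lt i) (ZMod.val_lt j) hij)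

end CharactersOfZMod

section DihedralConjugates

variable {m : ℕ} {F L : Type*} [Field F] [Field L] [Algebra F L] {c : F} {z : L}

/-- The orbit map `g ↦ g • z` of the dihedral group whose rotation `r i` acts by `z ↦ χ i z` and
whose reflection `sr i` acts by `z ↦ χ i z⁻¹`. With `χ i = ζ ^ i`, its values are the conjugates
of a root `z` of `dihedralTrinomial m c`. -/
def dihedralConj (χ : AddChar (ZMod m) F) (z : L) : DihedralGroup m → L
  | .r i => χ i • z
  | .sr i => χ i • z⁻¹

lemma dihedralConj_r_pow (χ : AddChar (ZMod m) F) (z : L) (i : ZMod m) :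
    dihedralConj χ z (.r i) ^ m = z ^ m := by
  rw [dihedralConj, _root_.smul_pow, addChar_zmod_pow_eq_one, one_smul]

lemma dihedralConj_sr_pow (χ : AddChar (ZMod m) F) (z : L) (i : ZMod m) :
    dihedralConj χ z (.sr i) ^ m = (z ^ m)⁻¹ := by
  rw [dihedralConj, _root_.smul_pow, addChar_zmod_pow_eq_one, one_smul, inv_pow]

lemma dihedralConj_ne_zero (χ : AddChar (ZMod m) F) (hz : z ≠ 0) :
    ∀ g, dihedralConj χ z g ≠ 0
  | .r i => smul_ne_zero (χ.val_isUnit i).ne_zero hz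
  | .sr i => smul_ne_zero (χ.val_isUnit i).ne_zero (inv_ne_zero hz)

lemma dihedralConj_r_inv (χ : AddChar (ZMod m) F) (z : L) (i : ZMod m) :
    (dihedralConj χ z (.r i))⁻¹ = dihedralConj χ z (.sr (-i)) := by
  rw [dihedralConj, dihedralConj, smul_inv₀, AddChar.map_neg_eq_inv]

lemma dihedralConj_injective {χ : AddChar (ZMod m) F} (hχ : Function.Injective χ) (hz : z ≠ 0)
    (hzm : z ^ (2 * m) ≠ 1) : Function.Injective (dihedralConj χ z) := by
  have hne : z ^ m ≠ (z ^ m)⁻¹ := by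
    intro h
    rw [← mul_eq_one_iff_eq_inv₀ (pow_ne_zero m hz), ← pow_add, ← two_mul] at h
    exact hzm h
  rintro (i | i) (j | j) h
  · rw [hχ (smul_left_injective F hz h)]
  · exact absurd ((dihedralConj_r_pow χ z i).symm.trans (h ▸ dihedralConj_sr_pow χ z j)) hne
  · exact absurd ((dihedralConj_r_pow χ z j).symm.trans (h ▸ dihedralConj_sr_pow χ z i)) hne
  · rw [hχ (smul_left_injective F (inv_ne_zero hz) h)]

lemma algHom_dihedralConj {χ : AddChar (ZMod m) F} {φ : L →ₐ[F] L} {g : DihedralGroup m}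
    (hφ : φ z = dihedralConj χ z g) (h : DihedralGroup m) :
    φ (dihedralConj χ z h) = dihedralConj χ z (g * h) := by
  rcases g with i | i <;> rcases h with j | j <;>
    simp only [dihedralConj, map_smul, map_inv₀, hφ, smul_inv₀, inv_inv, smul_smul,
      DihedralGroup.r_mul_r, DihedralGroup.r_mul_sr, DihedralGroup.sr_mul_r,
      DihedralGroup.sr_mul_sr, AddChar.map_add_eq_mul, AddChar.map_sub_eq_div, div_eq_mul_inv,
      mul_comm]

lemma aeval_dihedralConj_eq_zero (hm : m ≠ 0) (χ : AddChar (ZMod m) F)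
    (hz : aeval z (dihedralTrinomial m c) = 0) (g : DihedralGroup m) :
    aeval (dihedralConj χ z g) (dihedralTrinomial m c) = 0 := by
  obtain ⟨hz0, hzc⟩ := (aeval_dihedralTrinomial_eq_zero_iff hm).1 hz
  refine (aeval_dihedralTrinomial_eq_zero_iff hm).2 ⟨dihedralConj_ne_zero χ hz0 g, ?_⟩
  rcases g with i | i
  · rw [dihedralConj_r_pow, hzc]
  · rw [dihedralConj_sr_pow, inv_inv, add_comm, hzc]

end DihedralConjugates

section DicksonSplittingField

variable {m : ℕ} {F L : Type*} [Field F] [Field L] [Algebra F L] {c : F} {z : L}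

lemma splits_map_dickson_sub_C [NeZero m] {χ : AddChar (ZMod m) F} (hχ : Function.Injective χ)
    (hz : aeval z (dihedralTrinomial m c) = 0) (hzm : z ^ (2 * m) ≠ 1) :
    ((dickson 1 1 m - C c).map (algebraMap F L)).Splits := by
  have hm : m ≠ 0 := NeZero.ne m
  obtain ⟨hz0, -⟩ := (aeval_dihedralTrinomial_eq_zero_iff hm).1 hz
  have hmonic := isMonicOfDegree_dickson_sub_C hm 1 1 c
  let w : ZMod m → L := fun i ↦ dihedralConj χ z (.r i) + (dihedralConj χ z (.r i))⁻¹
  have hw : Function.Injective w := by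
    intro i j hij
    have hconj := dihedralConj_injective hχ hz0 hzm
    rcases (add_inv_eq_add_inv_iff (dihedralConj_ne_zero χ hz0 _)
      (dihedralConj_ne_zero χ hz0 _)).1 hij with h | h
    · exact DihedralGroup.r.inj (hconj h)
    · rw [dihedralConj_r_inv] at h
      exact nomatch hconj h
  refine splits_of_injective_of_natDegree_le_card
    (hmonic.monic.map (algebraMap F L)).ne_zero hw (fun i ↦ ?_) ?_
  · rw [IsRoot.def, eval_map_algebraMap]
    exact aeval_dickson_sub_C_eq_zero hm (aeval_dihedralConj_eq_zero hm χ hz _)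
  · rw [natDegree_map, hmonic.natDegree_eq, ZMod.card]

lemma mem_of_add_inv_mem {E : IntermediateField F L} {a : F} (ha0 : a ≠ 0) (ha : a ^ 2 ≠ 1)
    (hz : z + z⁻¹ ∈ E) (haz : a • z + (a • z)⁻¹ ∈ E) : z ∈ E := by
  have hcancel : a • (a • z + (a • z)⁻¹) - (z + z⁻¹) = (a ^ 2 - 1) • z := by
    rw [smul_add, smul_smul, ← sq, smul_inv₀, smul_inv_smul₀ ha0, sub_smul, one_smul]
    ring
  rw [← inv_smul_smul₀ (sub_ne_zero.2 ha) z, ← hcancel]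
  exact E.smul_mem (sub_mem (E.smul_mem haz) hz)

theorem isSplittingField_dickson_sub_C (hm : 3 ≤ m) {χ : AddChar (ZMod m) F}
    (hχ : Function.Injective χ) (pb : PowerBasis F L)
    (hpb : minpoly F pb.gen = dihedralTrinomial m c) :
    (dickson 1 1 m - C c).IsSplittingField F L := by
  have hm0 : NeZero m := ⟨by omega⟩
  have hz : aeval pb.gen (dihedralTrinomial m c) = 0 := hpb ▸ minpoly.aeval F pb.gen
  have hsplits := splits_map_dickson_sub_C hχ hz (pow_two_mul_ne_one_of_minpoly_eq hm0.ne hpb)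
  refine isSplittingField_iff_intermediateField.2 ⟨hsplits, ?_⟩
  set E := IntermediateField.adjoin F ((dickson 1 1 m - C c).rootSet L)
  have hmem (g : DihedralGroup m) : dihedralConj χ pb.gen g + (dihedralConj χ pb.gen g)⁻¹ ∈ E :=
    IntermediateField.subset_adjoin _ _ <| mem_rootSet.2
      ⟨(isMonicOfDegree_dickson_sub_C hm0.ne 1 1 c).ne_zero,
        aeval_dickson_sub_C_eq_zero hm0.ne (aeval_dihedralConj_eq_zero hm0.ne χ hz g)⟩
  have hzE : pb.gen ∈ E := mem_of_add_inv_mem (χ.val_isUnit 1).ne_zero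
    (addChar_zmod_one_sq_ne_one hm hχ) (by simpa [dihedralConj] using hmem (.r 0)) (hmem (.r 1))
  have hle : Algebra.adjoin F {pb.gen} ≤ E.toSubalgebra := Algebra.adjoin_singleton_le hzE
  rw [pb.adjoin_gen_eq_top, top_le_iff] at hle
  exact IntermediateField.toSubalgebra_injective hle

end DicksonSplittingField

section DihedralGaloisGroup

variable {m : ℕ} {F L : Type*} [Field F] [Field L] [Algebra F L] {c : F}

/-- The action of the dihedral group on `F(z)`, where `z = pb.gen` has minimal polynomial
`dihedralTrinomial m c`: the element `g` sends `z` to `dihedralConj χ z g`. -/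
noncomputable def dihedralHom (hm : m ≠ 0) (pb : PowerBasis F L)
    (hpb : minpoly F pb.gen = dihedralTrinomial m c) (χ : AddChar (ZMod m) F) :
    DihedralGroup m →* (L →ₐ[F] L) where
  toFun g := pb.lift (dihedralConj χ pb.gen g) <| by
    rw [hpb]
    exact aeval_dihedralConj_eq_zero hm χ (hpb ▸ minpoly.aeval F pb.gen) g
  map_one' := pb.algHom_ext <| by
    rw [pb.lift_gen, DihedralGroup.one_def, dihedralConj, AddChar.map_zero_eq_one, one_smul,
      AlgHom.one_apply]
  map_mul' g h := pb.algHom_ext <| by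
    rw [AlgHom.mul_apply, pb.lift_gen, pb.lift_gen, algHom_dihedralConj (pb.lift_gen ..)]

lemma dihedralHom_injective (hm : m ≠ 0) (pb : PowerBasis F L)
    (hpb : minpoly F pb.gen = dihedralTrinomial m c) {χ : AddChar (ZMod m) F}
    (hχ : Function.Injective χ) : Function.Injective (dihedralHom hm pb hpb χ) := by
  intro g h hgh
  have hgen : pb.gen ≠ 0 :=
    ((aeval_dihedralTrinomial_eq_zero_iff hm).1 (hpb ▸ minpoly.aeval F pb.gen)).1
  refine dihedralConj_injective hχ hgen (pow_two_mul_ne_one_of_minpoly_eq hm hpb) ?_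
  simpa only [dihedralHom, MonoidHom.coe_mk, OneHom.coe_mk, pb.lift_gen]
    using DFunLike.congr_fun hgh pb.gen

theorem nonempty_algEquiv_mulEquiv_dihedralGroup [NeZero m] (pb : PowerBasis F L)
    (hpb : minpoly F pb.gen = dihedralTrinomial m c) {χ : AddChar (ZMod m) F}
    (hχ : Function.Injective χ) : Nonempty ((L ≃ₐ[F] L) ≃* DihedralGroup m) := by
  have hm : m ≠ 0 := NeZero.ne m
  have : FiniteDimensional F L := pb.finite
  have hcard : Nat.card (L →ₐ[F] L) ≤ Nat.card (DihedralGroup m) := by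
    calc Nat.card (L →ₐ[F] L) ≤ Module.finrank F L := card_algHom_le_finrank F L L
      _ = 2 * m := by
        rw [pb.finrank, ← pb.natDegree_minpoly, hpb,
          (isMonicOfDegree_dihedralTrinomial hm c).natDegree_eq]
      _ = Nat.card (DihedralGroup m) := DihedralGroup.nat_card.symm
  have hbij := (dihedralHom_injective hm pb hpb hχ).bijective_of_nat_card_le hcard
  exact ⟨(Algebra.IsAlgebraic.algEquivEquivAlgHom F L).trans (MulEquiv.ofBijective _ hbij).symm⟩

theorem nonempty_gal_dickson_sub_C_mulEquiv_dihedralGroup (hm : 3 ≤ m) {ζ : F}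
    (hζ : IsPrimitiveRoot ζ m) (hirr : Irreducible (dihedralTrinomial m c)) :
    Nonempty ((dickson 1 1 m - C c).Gal ≃* DihedralGroup m) := by
  have : NeZero m := ⟨by omega⟩
  have : Fact (Irreducible (dihedralTrinomial m c)) := ⟨hirr⟩
  have hmonic := (isMonicOfDegree_dihedralTrinomial (NeZero.ne m) c).monic
  have hχ := zmodChar_injective hζ
  let pb := AdjoinRoot.powerBasis hmonic.ne_zero
  have hpb : minpoly F pb.gen = dihedralTrinomial m c :=
    AdjoinRoot.minpoly_powerBasis_gen_of_monic hmonic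
  have hsplit : (dickson 1 1 m - C c).IsSplittingField F (AdjoinRoot (dihedralTrinomial m c)) :=
    isSplittingField_dickson_sub_C hm hχ pb hpb
  obtain ⟨e⟩ := nonempty_algEquiv_mulEquiv_dihedralGroup pb hpb hχ
  exact ⟨(AlgEquiv.autCongr (IsSplittingField.algEquiv _ _).symm).trans e⟩

end DihedralGaloisGroup

lemma map_sub_C_X_eq_dickson_comp {K : Type*} [Field K] {m : ℕ} {f : K[X]}
    (hf : f.comp (X ^ 2) = Chebyshev.T K m ^ 2) (h4 : (4 : RatFunc K) ≠ 0) :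
    f.map (algebraMap K (RatFunc K)) - C RatFunc.X =
      C 4⁻¹ * (dickson 1 1 m - C (algebraMap K[X] (RatFunc K) (C 4 * X + C (-2)))).comp
        (C 4 * X + C (-2)) := by
  have hC : C 4⁻¹ * C (4 : RatFunc K) = 1 := by rw [← C_mul, inv_mul_cancel₀ h4, C_1]
  have hmap := congrArg (map (algebraMap K (RatFunc K)))
    (C_four_mul_eq_dickson_comp_of_comp_X_sq_eq_T_sq hf)
  rw [sub_comp, C_comp]
  simp only [map_add, map_mul, map_neg, map_ofNat, Polynomial.map_mul, Polynomial.map_add,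
    Polynomial.map_neg, Polynomial.map_ofNat, map_comp, map_dickson, map_X, map_one,
    RatFunc.algebraMap_X] at hC hmap ⊢
  linear_combination C 4⁻¹ * hmap - (map (algebraMap K (RatFunc K)) f - C RatFunc.X) * hC

theorem stmt8_general {K : Type*} [Field K] [NeZero (2 : K)] {m : ℕ} (hm : 3 ≤ m) {ζ : K}
    (hζ : IsPrimitiveRoot ζ m) {f : K[X]} (hf : f.comp (X ^ 2) = Chebyshev.T K m ^ 2) :
    Nonempty ((f.map (algebraMap K (RatFunc K)) - C RatFunc.X).Gal ≃* DihedralGroup m) := by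
  have h4 : (4 : K) ≠ 0 := by
    rw [← two_add_two_eq_four, ← two_mul]
    exact mul_ne_zero two_ne_zero two_ne_zero
  have h4' : (4 : RatFunc K) ≠ 0 := by
    rw [← map_ofNat (algebraMap K (RatFunc K)) 4]
    exact (_root_.map_ne_zero _).2 h4
  have hζ' := hζ.map_of_injective (algebraMap K (RatFunc K)).injective
  have hirr := irreducible_dihedralTrinomial_affine (m := m) (by omega) h4 (-2)
  obtain ⟨e⟩ := nonempty_gal_dickson_sub_C_mulEquiv_dihedralGroup hm hζ' hirr
  rw [map_sub_C_X_eq_dickson_comp hf h4']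
  obtain ⟨e'⟩ := nonempty_gal_C_mul_comp_affine_mulEquiv _ (inv_ne_zero h4') h4' (-2)
  exact ⟨e'.trans e⟩

theorem stmt8 (m : ℕ) (hm : 3 ≤ m) (f : Polynomial ℂ)
    (hf : f.comp (X ^ 2) = (Polynomial.Chebyshev.T ℂ (m : ℤ)) ^ 2) :
    Nonempty ((f.map (algebraMap ℂ (RatFunc ℂ)) - Polynomial.C RatFunc.X).Gal ≃*
      DihedralGroup m) :=
  stmt8_general hm (Complex.isPrimitiveRoot_exp m (by omega)) hf
end
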